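/- There exists a constant C₀ > 0 depending only on a₀ such that if ε₀⁻²/C₀ ≤ β ≤ λ, then for every τ ∈ (0,1): (1 - τ)² (|K| β / (2π e^{t₀})) Σ_{k=0}^∞ [λ - 1/4 - C₀/(τ ε₀)² - (2k+1)β]₊⁰ ≤ N(λ; q^{A⁰,0}_K), where [ρ]₊⁰ = 1 if ρ > 0 and 0 otherwise. -/

import Mathlib

open MeasureTheory Real Filter

noncomputable section

/-- The upper half-plane ℍ as a subset of ℝ². -/
def UHP : Set (ℝ × ℝ) := {p : ℝ × ℝ | 0 < p.2}

/-- The hyperbolic measure `dv = y⁻² dx dy` on ℍ. -/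
def volH : Measure (ℝ × ℝ) :=
  (volume.restrict UHP).withDensity fun p => ENNReal.ofReal ((p.2 ^ 2)⁻¹)

/-- x-derivative of a complex function on ℝ². -/
def dX (f : ℝ × ℝ → ℂ) (p : ℝ × ℝ) : ℂ := fderiv ℝ f p (1, 0)

/-- y-derivative of a complex function on ℝ². -/
def dY (f : ℝ × ℝ → ℂ) (p : ℝ × ℝ) : ℂ := fderiv ℝ f p (0, 1)

/-- x-derivative of a real function on ℝ². -/
def dXr (f : ℝ × ℝ → ℝ) (p : ℝ × ℝ) : ℝ := fderiv ℝ f p (1, 0)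

/-- y-derivative of a real function on ℝ². -/
def dYr (f : ℝ × ℝ → ℝ) (p : ℝ × ℝ) : ℝ := fderiv ℝ f p (0, 1)

/-- The magnetic field `b̃ = y² (∂ₓA₂ - ∂_yA₁)`. -/
def fieldB (A₁ A₂ : ℝ × ℝ → ℝ) (p : ℝ × ℝ) : ℝ := p.2 ^ 2 * (dXr A₂ p - dYr A₁ p)

/-- The magnetic intensity `b = |b̃|`. -/
def intenB (A₁ A₂ : ℝ × ℝ → ℝ) (p : ℝ × ℝ) : ℝ := |fieldB A₁ A₂ p|

/-- Smooth compactly supported test functions with support inside a set `Ω`. -/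
def IsTestOn (Ω : Set (ℝ × ℝ)) (f : ℝ × ℝ → ℂ) : Prop :=
  ContDiff ℝ (⊤ : ℕ∞) f ∧ HasCompactSupport f ∧ tsupport f ⊆ Ω

/-- The quadratic form of the magnetic Laplacian on ℍ. -/
def qA (A₁ A₂ : ℝ × ℝ → ℝ) (f : ℝ × ℝ → ℂ) : ℝ :=
  ∫ p, p.2 ^ 2 * (‖-Complex.I * dX f p - (A₁ p : ℂ) * f p‖ ^ 2 +
    ‖-Complex.I * dY f p - (A₂ p : ℂ) * f p‖ ^ 2) ∂volH

/-- hyperbolic distance from `(x,y)` to `(0,1)`. -/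
def hDist (p : ℝ × ℝ) : ℝ :=
  2 * Real.arsinh (Real.sqrt (p.1 ^ 2 + (p.2 - 1) ^ 2) / (2 * Real.sqrt p.2))

/-- (H1) : the magnetic intensity tends to +∞ at infinity. -/
def H1 (A₁ A₂ : ℝ × ℝ → ℝ) : Prop :=
  ∀ M : ℝ, ∃ R : ℝ, ∀ p ∈ UHP, R ≤ hDist p → M ≤ intenB A₁ A₂ p

/-- (H2) : control of the derivative of the magnetic field. -/
def H2 (C₀ : ℝ) (A₁ A₂ : ℝ × ℝ → ℝ) : Prop :=
  ∀ p ∈ UHP, p.2 * Real.sqrt ((dXr (fieldB A₁ A₂) p) ^ 2 + (dYr (fieldB A₁ A₂) p) ^ 2)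
    ≤ C₀ * (intenB A₁ A₂ p + 1)

/-- Counting function of a quadratic form `q` with form domain `dom` and squared
norm `nsq`, via Glazman's lemma. -/
def NN (q : (ℝ × ℝ → ℂ) → ℝ) (dom : Set (ℝ × ℝ → ℂ)) (nsq : (ℝ × ℝ → ℂ) → ℝ)
    (lam : ℝ) : ℕ :=
  sSup {n : ℕ | ∃ V : Submodule ℂ (ℝ × ℝ → ℂ), (V : Set (ℝ × ℝ → ℂ)) ⊆ dom ∧
    Module.finrank ℂ V = n ∧ ∀ u ∈ V, u ≠ 0 → q u < lam * nsq u}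

/-- Heaviside function `[ρ]₊⁰`. -/
def heav (ρ : ℝ) : ℝ := if 0 < ρ then 1 else 0


/-- The rectangle `K = X₀ + K₀` with `K₀ = (-ε₀ a e^{t₀}/2, ε₀ a e^{t₀}/2) × (-ε₀/2, ε₀/2)`. -/
def Krect (x₀ t₀ a ε₀ : ℝ) : Set (ℝ × ℝ) :=
  Set.Ioo (x₀ - ε₀ * a * Real.exp t₀ / 2) (x₀ + ε₀ * a * Real.exp t₀ / 2) ×ˢ
    Set.Ioo (t₀ - ε₀ / 2) (t₀ + ε₀ / 2)

/-- `Ã₁(x,t) = -∫_{e^{t₀}}^{e^t} b̃(x,s) s⁻² ds`. -/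
def Atil (A₁ A₂ : ℝ × ℝ → ℝ) (t₀ : ℝ) (p : ℝ × ℝ) : ℝ :=
  -∫ s in Real.exp t₀..Real.exp p.2, fieldB A₁ A₂ (p.1, s) / s ^ 2

/-- `A₁⁰(x,t) = -(t - t₀) e^{-t₀} b̃₀`. -/
def Azero (t₀ b₀ : ℝ) (p : ℝ × ℝ) : ℝ := -(p.2 - t₀) * Real.exp (-t₀) * b₀

/-- The Dirichlet form `q̂^Ã_K`. -/
def qhatK (A₁ A₂ : ℝ × ℝ → ℝ) (x₀ t₀ a ε₀ : ℝ) (w : ℝ × ℝ → ℂ) : ℝ :=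
  ∫ p in Krect x₀ t₀ a ε₀,
    (Real.exp (2 * p.2) * ‖-Complex.I * dX w p - (Atil A₁ A₂ t₀ p : ℂ) * w p‖ ^ 2
      + ‖dY w p‖ ^ 2 + (1/4) * ‖w p‖ ^ 2)

/-- The Dirichlet form `q̂^{Ã,0}_K` (with frozen factor `e^{2t₀}`). -/
def qhatK0 (A₁ A₂ : ℝ × ℝ → ℝ) (x₀ t₀ a ε₀ : ℝ) (w : ℝ × ℝ → ℂ) : ℝ :=
  ∫ p in Krect x₀ t₀ a ε₀,
    (Real.exp (2 * t₀) * ‖-Complex.I * dX w p - (Atil A₁ A₂ t₀ p : ℂ) * w p‖ ^ 2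
      + ‖dY w p‖ ^ 2 + (1/4) * ‖w p‖ ^ 2)

/-- The Dirichlet form `q^{A⁰,0}_K` of the frozen constant magnetic field `b̃₀`. -/
def qK0 (x₀ t₀ a ε₀ b₀ : ℝ) (w : ℝ × ℝ → ℂ) : ℝ :=
  ∫ p in Krect x₀ t₀ a ε₀,
    (Real.exp (2 * t₀) * ‖-Complex.I * dX w p - (Azero t₀ b₀ p : ℂ) * w p‖ ^ 2
      + ‖dY w p‖ ^ 2 + (1/4) * ‖w p‖ ^ 2)


/-- Dirichlet eigenvalue counting function of `q^{A⁰,0}_K` on `L²(K)`. -/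
def NK0 (x₀ t₀ a ε₀ b₀ lam : ℝ) : ℕ :=
  NN (qK0 x₀ t₀ a ε₀ b₀) {w | IsTestOn (Krect x₀ t₀ a ε₀) w}
    (fun w => ∫ p in Krect x₀ t₀ a ε₀, ‖w p‖ ^ 2) lam


theorem neg_space_pigeonhole {F : Type*} [AddCommGroup F] [Module ℂ F] (D : Submodule ℂ F)
    (B : F → F → ℂ)
    (hadd : ∀ u ∈ D, ∀ v ∈ D, ∀ w ∈ D, B (u + v) w = B u w + B v w)
    (hsmul : ∀ (c : ℂ), ∀ u ∈ D, ∀ w ∈ D, B (c • u) w = c * B u w)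
    (hsymm : ∀ u ∈ D, ∀ v ∈ D, B u v = (starRingEnd ℂ) (B v u))
    (S : Set ℕ)
    (hS : S = {n : ℕ | ∃ V : Submodule ℂ F, (V : Set F) ⊆ D ∧
      Module.finrank ℂ V = n ∧ ∀ u ∈ V, u ≠ 0 → (B u u).re < 0})
    (hbdd : BddAbove S)
    {ι J : Type*} [Fintype ι] [Fintype J] (T : J → (ι → ℂ) →ₗ[ℂ] F)
    (hT : ∀ j v, T j v ∈ D)
    (hneg : ∀ v, v ≠ 0 → ∑ j, (B (T j v) (T j v)).re < 0) :
    Fintype.card ι ≤ Fintype.card J * sSup S := by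
  classical
  have h0 : (0 : ℕ) ∈ S := by
    rw [hS]
    refine ⟨⊥, ?_, finrank_bot ℂ F, ?_⟩
    · intro x hx
      have : x = 0 := by simpa using hx
      rw [this]; exact D.zero_mem
    · intro u hu hu0
      exact absurd ((Submodule.mem_bot ℂ).1 hu) hu0
  have hmem : sSup S ∈ S := Nat.sSup_mem ⟨0, h0⟩ hbdd
  have hM : ∃ M : Submodule ℂ F, (M : Set F) ⊆ D ∧ Module.finrank ℂ M = sSup S ∧
      (∀ u ∈ M, u ≠ 0 → (B u u).re < 0) ∧ FiniteDimensional ℂ M := by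
    by_cases hz : sSup S = 0
    · refine ⟨⊥, ?_, by rw [hz]; exact finrank_bot ℂ F, ?_, inferInstance⟩
      · intro x hx
        have : x = 0 := by simpa using hx
        rw [this]; exact D.zero_mem
      · intro u hu hu0
        exact absurd ((Submodule.mem_bot ℂ).1 hu) hu0
    · have hm2 := hmem
      rw [hS] at hm2
      obtain ⟨V, hV, hf, hn⟩ := hm2
      rw [← hS] at hf
      exact ⟨V, hV, hf, hn, Module.finite_of_finrank_pos (by omega)⟩
  obtain ⟨M, hMD, hMf, hMn, hMfin⟩ := hM
  by_contra hlt
  push Not at hlt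
  let b := Module.finBasis ℂ M
  let Φ : (ι → ℂ) →ₗ[ℂ] (J × Fin (Module.finrank ℂ M) → ℂ) :=
    { toFun := fun v ji => B (T ji.1 v) (b ji.2 : F)
      map_add' := by
        intro v w; ext ji
        simp only [map_add, Pi.add_apply]
        exact hadd _ (hT _ _) _ (hT _ _) _ (hMD (b ji.2).2)
      map_smul' := by
        intro c v; ext ji
        simp only [map_smul, Pi.smul_apply, RingHom.id_apply, smul_eq_mul]
        exact hsmul _ _ (hT _ _) _ (hMD (b ji.2).2) }
  have hker : LinearMap.ker Φ ≠ ⊥ := by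
    apply LinearMap.ker_ne_bot_of_finrank_lt
    simp only [Module.finrank_fintype_fun_eq_card, Fintype.card_prod, Fintype.card_fin]
    rw [hMf]; exact hlt
  obtain ⟨v, hvk, hv0⟩ := Submodule.exists_mem_ne_zero_of_ne_bot hker
  have hlt0 := hneg v hv0
  obtain ⟨j, -, hj⟩ := Finset.exists_lt_of_sum_lt (s := Finset.univ)
    (f := fun j => (B (T j v) (T j v)).re) (g := fun _ => (0:ℝ)) (by simpa using hlt0)
  set u := T j v with hu
  have huD : u ∈ D := hT j v
  have huM : ∀ m ∈ M, B m u = 0 := by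
    intro m hm
    have hb : ∀ i, B (b i : F) u = 0 := by
      intro i
      have h1 : B u (b i : F) = 0 := by
        have := congrFun (LinearMap.mem_ker.1 hvk) (j, i)
        simpa [Φ] using this
      rw [hsymm _ (hMD (b i).2) _ huD, h1, map_zero]
    let ψ : M →ₗ[ℂ] ℂ :=
      { toFun := fun m => B (m : F) u
        map_add' := fun x y => hadd _ (hMD x.2) _ (hMD y.2) _ huD
        map_smul' := fun c x => hsmul c _ (hMD x.2) _ huD }
    have : ψ = 0 := b.ext (fun i => hb i)
    exact congrArg (fun f : M →ₗ[ℂ] ℂ => f ⟨m, hm⟩) this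
  have huM' : ∀ m ∈ M, B u m = 0 := by
    intro m hm
    rw [hsymm _ huD _ (hMD hm), huM m hm, map_zero]
  have hunot : u ∉ M := by
    intro h
    rw [huM u h] at hj
    simp at hj
  have hu0 : u ≠ 0 := fun h => hunot (h ▸ M.zero_mem)
  have hnew : Module.finrank ℂ M + 1 ∈ S := by
    rw [hS]
    refine ⟨M ⊔ Submodule.span ℂ {u}, ?_, ?_, ?_⟩
    · have : M ⊔ Submodule.span ℂ {u} ≤ D := by
        refine sup_le hMD ?_
        rw [Submodule.span_singleton_le_iff_mem]; exact huD
      exact this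
    · have hdisj : M ⊓ Submodule.span ℂ {u} = ⊥ := by
        rw [eq_bot_iff]
        rintro x ⟨hx1, hx2⟩
        obtain ⟨c, rfl⟩ := Submodule.mem_span_singleton.1 hx2
        by_cases hc : c = 0
        · simp [hc]
        · exfalso; apply hunot
          have := M.smul_mem c⁻¹ hx1
          rwa [smul_smul, inv_mul_cancel₀ hc, one_smul] at this
      have := Submodule.finrank_sup_add_finrank_inf_eq M (Submodule.span ℂ {u})
      rw [hdisj, finrank_bot, finrank_span_singleton hu0] at this
      simpa using this
    · intro x hx hx0
      obtain ⟨m, hm, y, hy, rfl⟩ := Submodule.mem_sup.1 hx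
      obtain ⟨c, rfl⟩ := Submodule.mem_span_singleton.1 hy
      have hmD : m ∈ D := hMD hm
      have hcu : c • u ∈ D := D.smul_mem c huD
      have e1 : B (m + c • u) (m + c • u) = B m m + c * (starRingEnd ℂ c) * B u u := by
        have a1 : B m (m + c • u) = B m m := by
          rw [hsymm _ hmD _ (D.add_mem hmD hcu), hadd _ hmD _ hcu _ hmD, hsmul _ _ huD _ hmD,
            huM' m hm, mul_zero, add_zero, ← hsymm _ hmD _ hmD]
        have a2 : B u (m + c • u) = (starRingEnd ℂ c) * B u u := by
          rw [hsymm _ huD _ (D.add_mem hmD hcu), hadd _ hmD _ hcu _ huD, hsmul _ _ huD _ huD,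
            huM m hm, zero_add, map_mul, ← hsymm _ huD _ huD]
        rw [hadd _ hmD _ hcu _ (D.add_mem hmD hcu), hsmul _ _ huD _ (D.add_mem hmD hcu), a1, a2]
        ring
      have e2 : (B (m + c • u) (m + c • u)).re = (B m m).re + Complex.normSq c * (B u u).re := by
        rw [e1, Complex.mul_conj, Complex.add_re, Complex.re_ofReal_mul]
      rw [e2]
      by_cases hc : c = 0
      · subst hc
        have : m ≠ 0 := by simpa using hx0
        simpa using hMn m hm this
      · have hp : 0 < Complex.normSq c := Complex.normSq_pos.2 hc
        have hle : (B m m).re ≤ 0 := by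
          by_cases hm0 : m = 0
          · rw [hm0]
            have : B 0 0 = 0 := by
              have := hsmul 0 _ D.zero_mem _ D.zero_mem
              simpa using this
            rw [this]; simp
          · exact (hMn m hm hm0).le
        have hj' : (B u u).re < 0 := by simpa using hj
        nlinarith [mul_neg_of_pos_of_neg hp hj']
  have := le_csSup hbdd hnew
  omega

def ThC (x : ℝ) : ℝ := π / 2 * Real.smoothTransition x

def pcut (δ x : ℝ) : ℝ := Real.sin (ThC (x / δ)) ^ 2

def etac (l δ x : ℝ) : ℝ := Real.sin (ThC (x / δ)) * Real.cos (ThC ((x - l) / δ))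

theorem ThC_contDiff : ContDiff ℝ (⊤ : ℕ∞) ThC :=
  contDiff_const.mul Real.smoothTransition.contDiff

theorem ThC_zero {x : ℝ} (h : x ≤ 0) : ThC x = 0 := by
  simp [ThC, Real.smoothTransition.zero_of_nonpos h]

theorem ThC_one {x : ℝ} (h : 1 ≤ x) : ThC x = π / 2 := by
  simp [ThC, Real.smoothTransition.one_of_one_le h]

theorem etac_contDiff (l δ : ℝ) : ContDiff ℝ (⊤ : ℕ∞) (etac l δ) := by
  unfold etac
  refine ContDiff.mul ?_ ?_
  · exact Real.contDiff_sin.comp (ThC_contDiff.comp (contDiff_id.div_const δ))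
  · exact Real.contDiff_cos.comp (ThC_contDiff.comp ((contDiff_id.sub contDiff_const).div_const δ))

theorem pcut_contDiff (δ : ℝ) : ContDiff ℝ (⊤ : ℕ∞) (pcut δ) := by
  unfold pcut
  exact (Real.contDiff_sin.comp (ThC_contDiff.comp (contDiff_id.div_const δ))).pow 2

theorem etac_zero_left {l δ x : ℝ} (hδ : 0 < δ) (h : x ≤ 0) : etac l δ x = 0 := by
  simp [etac, ThC_zero (div_nonpos_of_nonpos_of_nonneg h hδ.le)]

theorem etac_zero_right {l δ x : ℝ} (hδ : 0 < δ) (h : l + δ ≤ x) : etac l δ x = 0 := by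
  have : 1 ≤ (x - l) / δ := by rw [le_div_iff₀ hδ]; linarith
  simp [etac, ThC_one this]

theorem pcut_zero {δ x : ℝ} (hδ : 0 < δ) (h : x ≤ 0) : pcut δ x = 0 := by
  simp [pcut, ThC_zero (div_nonpos_of_nonpos_of_nonneg h hδ.le)]

theorem pcut_one {δ x : ℝ} (hδ : 0 < δ) (h : δ ≤ x) : pcut δ x = 1 := by
  have : 1 ≤ x / δ := by rw [le_div_iff₀ hδ]; linarith
  simp [pcut, ThC_one this]

theorem etac_sq {l δ : ℝ} (hδ : 0 < δ) (hl : δ ≤ l) (x : ℝ) :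
    etac l δ x ^ 2 = pcut δ x - pcut δ (x - l) := by
  rcases le_total x l with h | h
  · have h2 : (x - l) / δ ≤ 0 := div_nonpos_of_nonpos_of_nonneg (by linarith) hδ.le
    simp [etac, pcut, ThC_zero h2]
  · rw [pcut_one hδ (hl.trans h)]
    have : 1 ≤ x / δ := by rw [le_div_iff₀ hδ]; linarith
    simp only [etac, pcut, ThC_one this, Real.sin_pi_div_two, one_mul]
    rw [Real.cos_sq']

theorem deriv_zero_of_eventually_const {f : ℝ → ℝ} {s : Set ℝ} {c : ℝ} (hf : ContDiff ℝ (⊤ : ℕ∞) f)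
    (hs : ∀ x ∈ s, f x = c) (x : ℝ) (hx : x ∈ closure (interior s)) : deriv f x = 0 := by
  have hcl : IsClosed {x | deriv f x = 0} :=
    isClosed_eq (hf.continuous_deriv (by norm_num)) continuous_const
  refine hcl.closure_subset_iff.2 ?_ hx
  intro y hy
  have : f =ᶠ[nhds y] fun _ => c := by
    filter_upwards [isOpen_interior.mem_nhds hy] with z hz using hs z (interior_subset hz)
  show deriv f y = 0
  rw [this.deriv_eq]; simp

theorem deriv_zero_Iic {f : ℝ → ℝ} {a c : ℝ} (hf : ContDiff ℝ (⊤ : ℕ∞) f)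
    (hs : ∀ x ≤ a, f x = c) {x : ℝ} (hx : x ≤ a) : deriv f x = 0 :=
  deriv_zero_of_eventually_const (s := Set.Iic a) hf hs x (by
    rw [interior_Iic, closure_Iio]; exact hx)

theorem deriv_zero_Ici {f : ℝ → ℝ} {a c : ℝ} (hf : ContDiff ℝ (⊤ : ℕ∞) f)
    (hs : ∀ x, a ≤ x → f x = c) {x : ℝ} (hx : a ≤ x) : deriv f x = 0 :=
  deriv_zero_of_eventually_const (s := Set.Ici a) hf hs x (by
    rw [interior_Ici, closure_Ioi]; exact hx)

theorem etac_mul_deriv {l δ : ℝ} (hδ : 0 < δ) (hl : δ ≤ l) (x : ℝ) :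
    2 * (etac l δ x * deriv (etac l δ) x) = deriv (pcut δ) x - deriv (pcut δ) (x - l) := by
  have h1 : HasDerivAt (fun x => etac l δ x ^ 2) (2 * (etac l δ x * deriv (etac l δ) x)) x := by
    have := (((etac_contDiff l δ).differentiable (by norm_num)) x).hasDerivAt.pow 2
    refine this.congr_deriv ?_
    simp; ring
  have hp : ∀ y, HasDerivAt (pcut δ) (deriv (pcut δ) y) y := fun y =>
    (((pcut_contDiff δ).differentiable (by norm_num)) y).hasDerivAt
  have h2 : HasDerivAt (fun x => etac l δ x ^ 2) (deriv (pcut δ) x - deriv (pcut δ) (x - l)) x := by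
    have e : (fun x => etac l δ x ^ 2) = fun x => pcut δ x - pcut δ (x - l) :=
      funext (etac_sq hδ hl)
    rw [e]
    exact (hp x).sub ((hp (x - l)).comp_sub_const x l)
  exact h1.unique h2

theorem etac_deriv_bound : ∃ C1 : ℝ, 0 < C1 ∧ ∀ l δ x : ℝ, 0 < δ → |deriv (etac l δ) x| ≤ C1 / δ := by
  have hc : Continuous (deriv ThC) := ThC_contDiff.continuous_deriv (by norm_num)
  obtain ⟨C, hC⟩ := (isCompact_Icc (a := (0:ℝ)) (b := 1)).exists_bound_of_continuousOn hc.continuousOn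
  have hb : ∀ x, |deriv ThC x| ≤ |C| := by
    intro x
    rcases le_total x 0 with h | h
    · rw [deriv_zero_Iic ThC_contDiff (fun y hy => ThC_zero hy) h]; simp
    rcases le_total 1 x with h' | h'
    · rw [deriv_zero_Ici ThC_contDiff (fun y hy => ThC_one hy) h']; simp
    exact (hC x ⟨h, h'⟩).trans (le_abs_self C)
  refine ⟨2 * |C| + 1, by positivity, ?_⟩
  intro l δ x hδ
  have hT : ∀ y, HasDerivAt ThC (deriv ThC y) y := fun y =>
    ((ThC_contDiff.differentiable (by norm_num)) y).hasDerivAt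
  have h1 : HasDerivAt (fun x => ThC (x / δ)) (deriv ThC (x / δ) * (1 / δ)) x :=
    HasDerivAt.comp (h₂ := ThC) (h := fun x : ℝ => x / δ) x (hT (x / δ)) ((hasDerivAt_id x).div_const δ)
  have h2 : HasDerivAt (fun x => ThC ((x - l) / δ)) (deriv ThC ((x - l) / δ) * (1 / δ)) x :=
    HasDerivAt.comp (h₂ := ThC) (h := fun x : ℝ => (x - l) / δ) x (hT ((x - l) / δ)) (((hasDerivAt_id x).sub_const l).div_const δ)
  have h3 : HasDerivAt (etac l δ) _ x := h1.sin.mul h2.cos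
  rw [h3.deriv]
  have b1 := hb (x / δ)
  have b2 := hb ((x - l) / δ)
  set A := deriv ThC (x / δ)
  set B := deriv ThC ((x - l) / δ)
  set s := ThC (x / δ)
  set t := ThC ((x - l) / δ)
  have e : Real.cos s * (A * (1 / δ)) * Real.cos t + Real.sin s * (-Real.sin t * (B * (1 / δ)))
      = (Real.cos s * Real.cos t * A - Real.sin s * Real.sin t * B) / δ := by ring
  rw [e, abs_div, abs_of_pos hδ]
  apply div_le_div_of_nonneg_right _ hδ.le
  have c1 : |Real.cos s * Real.cos t * A| ≤ |C| := by
    rw [abs_mul, abs_mul]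
    have := mul_le_one₀ (Real.abs_cos_le_one s) (abs_nonneg _) (Real.abs_cos_le_one t)
    nlinarith [abs_nonneg A]
  have c2 : |Real.sin s * Real.sin t * B| ≤ |C| := by
    rw [abs_mul, abs_mul]
    have := mul_le_one₀ (Real.abs_sin_le_one s) (abs_nonneg _) (Real.abs_sin_le_one t)
    nlinarith [abs_nonneg B]
  have := abs_sub (Real.cos s * Real.cos t * A) (Real.sin s * Real.sin t * B)
  linarith

theorem per_lemma {P G : ℝ → ℝ} {l c : ℝ} (hl : 0 < l) (hP : Continuous P) (hG : Continuous G)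
    (hper : ∀ x, G (x + l) = G x) (h0 : ∀ x ≤ 0, P x = 0) (h1 : ∀ x, l ≤ x → P x = c) :
    ∫ x, (P x - P (x - l)) * G x = c * ∫ x in (0:ℝ)..l, G x := by
  have hs : Function.support (fun x => (P x - P (x - l)) * G x) ⊆ Set.Ioc 0 (2 * l) := by
    intro x hx
    by_contra hn
    apply hx
    simp only [Set.mem_Ioc, not_and_or, not_lt, not_le] at hn
    rcases hn with h | h
    · simp [h0 x h, h0 (x - l) (by linarith)]
    · simp [h1 x (by linarith), h1 (x - l) (by linarith)]
  rw [← intervalIntegral.integral_eq_integral_of_support_subset hs]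
  have hc1 : Continuous fun x => P x * G x := hP.mul hG
  have hc2 : Continuous fun x => P (x - l) * G x := (hP.comp (by fun_prop)).mul hG
  have i1 : ∀ a b, IntervalIntegrable (fun x => P x * G x) volume a b := fun a b =>
    hc1.intervalIntegrable a b
  have i2 : ∀ a b, IntervalIntegrable (fun x => P (x - l) * G x) volume a b := fun a b =>
    hc2.intervalIntegrable a b
  simp only [sub_mul]
  rw [intervalIntegral.integral_sub (i1 _ _) (i2 _ _),
    ← intervalIntegral.integral_add_adjacent_intervals (i1 0 l) (i1 l (2 * l)),
    ← intervalIntegral.integral_add_adjacent_intervals (i2 0 l) (i2 l (2 * l))]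
  have e1 : ∫ x in (0:ℝ)..l, P (x - l) * G x = 0 := by
    rw [intervalIntegral.integral_congr (g := fun _ => 0)]
    · simp
    · intro x hx
      rw [Set.uIcc_of_le hl.le] at hx
      simp [h0 (x - l) (by linarith [hx.2])]
  have sh : ∀ H : ℝ → ℝ, ∫ x in l..(2*l), H x = ∫ x in (0:ℝ)..l, H (x + l) := by
    intro H
    rw [intervalIntegral.integral_comp_add_right H l]
    congr 1 <;> ring
  have e2 : ∫ x in l..(2*l), P (x - l) * G x = ∫ x in (0:ℝ)..l, P x * G x := by
    rw [sh]
    simp only [hper, add_sub_cancel_right]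
  have e3 : ∫ x in l..(2*l), P x * G x = c * ∫ x in (0:ℝ)..l, G x := by
    rw [sh, ← intervalIntegral.integral_const_mul]
    apply intervalIntegral.integral_congr
    intro x hx
    rw [Set.uIcc_of_le hl.le] at hx
    simp [hper, h1 (x + l) (by linarith [hx.1])]
  rw [e1, e2, e3]; ring

theorem per_bound {R G : ℝ → ℝ} {l M : ℝ} (hl : 0 < l) (hR : Continuous R) (hG : Continuous G)
    (hper : ∀ x, G (x + l) = G x) (hG0 : ∀ x, 0 ≤ G x)
    (hRM : ∀ x, R x ≤ M) (hR0 : ∀ x ≤ 0, R x = 0) (hR1 : ∀ x, 2 * l ≤ x → R x = 0) :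
    ∫ x, R x * G x ≤ 2 * M * ∫ x in (0:ℝ)..l, G x := by
  have hs : Function.support (fun x => R x * G x) ⊆ Set.Ioc 0 (2 * l) := by
    intro x hx
    by_contra hn
    apply hx
    simp only [Set.mem_Ioc, not_and_or, not_lt, not_le] at hn
    rcases hn with h | h
    · simp [hR0 x h]
    · simp [hR1 x h.le]
  rw [← intervalIntegral.integral_eq_integral_of_support_subset hs]
  have h1 : ∫ x in (0:ℝ)..(2*l), R x * G x ≤ ∫ x in (0:ℝ)..(2*l), M * G x := by
    apply intervalIntegral.integral_mono_on (by linarith)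
    · exact (hR.mul hG).intervalIntegrable _ _
    · exact (continuous_const.mul hG).intervalIntegrable _ _
    · intro x _
      exact mul_le_mul_of_nonneg_right (hRM x) (hG0 x)
  refine h1.trans (le_of_eq ?_)
  rw [intervalIntegral.integral_const_mul,
    ← intervalIntegral.integral_add_adjacent_intervals (hG.intervalIntegrable 0 l)
      (hG.intervalIntegrable l (2 * l))]
  have sh : ∫ x in l..(2*l), G x = ∫ x in (0:ℝ)..l, G x := by
    have : ∫ x in (0:ℝ)..l, G (x + l) = ∫ x in l..(2*l), G x := by
      rw [intervalIntegral.integral_comp_add_right G l]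
      congr 1 <;> ring
    rw [← this]; simp only [hper]
  rw [sh]; ring

theorem cpt_lemma {P F : ℝ → ℝ} {l c δ : ℝ} (n : ℕ) (hP : Continuous P) (hF : Continuous F)
    (hsupp : ∀ x, F x ≠ 0 → δ ≤ x ∧ x ≤ n * l)
    (h0 : ∀ x ≤ 0, P x = 0) (h1 : ∀ x, δ ≤ x → P x = c) :
    ∑ j : Fin n, ∫ x, (P x - P (x - l)) * F (x + (j : ℕ) * l) = c * ∫ x, F x := by
  have hFc : HasCompactSupport F := HasCompactSupport.intro (isCompact_Icc (a := δ) (b := n * l))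
    (fun x hx => by by_contra h; exact hx (hsupp x h))
  have e : ∀ j : ℕ, ∫ x, (P x - P (x - l)) * F (x + j * l)
      = ∫ x, (P (x - j * l) - P (x - (j + 1 : ℕ) * l)) * F x := by
    intro j
    rw [← integral_sub_right_eq_self (fun x => (P x - P (x - l)) * F (x + j * l)) (j * l)]
    congr 1; ext x
    push_cast
    congr 3 <;> ring_nf
  rw [Fin.sum_univ_eq_sum_range (fun j => ∫ x, (P x - P (x - l)) * F (x + j * l)) n]
  simp only [e]
  rw [← integral_finsetSum, ← integral_const_mul]
  · congr 1; ext x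
    rw [← Finset.sum_mul, Finset.sum_range_sub' (fun j : ℕ => P (x - j * l))]
    by_cases hx : F x = 0
    · simp [hx]
    · obtain ⟨ha, hb⟩ := hsupp x hx
      simp only [Nat.cast_zero, zero_mul, sub_zero]
      rw [h1 x ha, h0 (x - n * l) (by linarith)]; ring
  · intro j _
    apply Continuous.integrable_of_hasCompactSupport
    · refine Continuous.mul (Continuous.sub ?_ ?_) hF
      · exact hP.comp (by fun_prop)
      · exact hP.comp (by fun_prop)
    · exact hFc.mul_left

theorem cpt_bound {R F : ℝ → ℝ} {l M : ℝ} (n : ℕ) (hl : 0 < l) (hM : 0 ≤ M) (hR : Continuous R)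
    (hF : Continuous F) (hFc : HasCompactSupport F) (hF0 : ∀ x, 0 ≤ F x)
    (hRM : ∀ x, R x ≤ M) (hR0 : ∀ x ≤ 0, R x = 0) (hR1 : ∀ x, 2 * l ≤ x → R x = 0) :
    ∑ j : Fin n, ∫ x, R x * F (x + (j : ℕ) * l) ≤ 2 * M * ∫ x, F x := by
  have hi : ∀ a b, IntervalIntegrable F volume a b := fun a b => hF.intervalIntegrable a b
  have e : ∀ j : ℕ, ∫ x, R x * F (x + j * l) ≤
      M * ((∫ x in (j * l)..((j + 1 : ℕ) * l), F x) +
        ∫ x in (j * l + l)..((j + 1 : ℕ) * l + l), F x) := by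
    intro j
    have hs : Function.support (fun x => R x * F (x + j * l)) ⊆ Set.Ioc 0 (2 * l) := by
      intro x hx
      by_contra hn
      apply hx
      simp only [Set.mem_Ioc, not_and_or, not_lt, not_le] at hn
      rcases hn with h | h
      · simp [hR0 x h]
      · simp [hR1 x h.le]
    rw [← intervalIntegral.integral_eq_integral_of_support_subset hs]
    have hFs : Continuous fun x => F (x + j * l) := hF.comp (by fun_prop)
    have h1 : ∫ x in (0:ℝ)..(2*l), R x * F (x + j * l) ≤ ∫ x in (0:ℝ)..(2*l), M * F (x + j * l) := by
      apply intervalIntegral.integral_mono_on (by linarith)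
      · exact (hR.mul hFs).intervalIntegrable _ _
      · exact (continuous_const.mul hFs).intervalIntegrable _ _
      · intro x _
        exact mul_le_mul_of_nonneg_right (hRM x) (hF0 _)
    refine h1.trans (le_of_eq ?_)
    rw [intervalIntegral.integral_const_mul, intervalIntegral.integral_comp_add_right F (j * l)]
    congr 1
    have : ((j + 1 : ℕ) : ℝ) * l = j * l + l := by push_cast; ring
    rw [this, intervalIntegral.integral_add_adjacent_intervals (hi _ _) (hi _ _)]
    congr 1 <;> ring
  rw [Fin.sum_univ_eq_sum_range (fun j => ∫ x, R x * F (x + j * l)) n]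
  refine (Finset.sum_le_sum fun j _ => e j).trans ?_
  rw [← Finset.mul_sum, Finset.sum_add_distrib,
    intervalIntegral.sum_integral_adjacent_intervals (a := fun j : ℕ => (j:ℝ) * l)
      (fun k _ => hi _ _),
    intervalIntegral.sum_integral_adjacent_intervals (a := fun j : ℕ => (j:ℝ) * l + l)
      (fun k _ => hi _ _)]
  have hint : Integrable F := hF.integrable_of_hasCompactSupport hFc
  have hle : ∀ a b : ℝ, a ≤ b → ∫ x in a..b, F x ≤ ∫ x, F x := by
    intro a b hab
    rw [intervalIntegral.integral_of_le hab]
    exact setIntegral_le_integral hint (ae_of_all _ hF0)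
  have a1 := hle ((0:ℕ) * l) (n * l) (by push_cast; rw [zero_mul]; positivity)
  have a2 := hle ((0:ℕ) * l + l) (n * l + l) (by push_cast; rw [zero_mul]; nlinarith [(Nat.cast_nonneg n : (0:ℝ) ≤ n)])
  nlinarith

theorem integrable_poly_gauss {β : ℝ} (hβ : 0 < β) (P : Polynomial ℝ) :
    Integrable fun s : ℝ => P.eval s * Real.exp (-β * s ^ 2) := by
  induction P using Polynomial.induction_on' with
  | add p q hp hq =>
    simp only [Polynomial.eval_add, add_mul]; exact hp.add hq
  | monomial n c =>
    have := (integrable_rpow_mul_exp_neg_mul_sq hβ (s := (n:ℝ)) (by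
      have : (0:ℝ) ≤ n := Nat.cast_nonneg n
      linarith)).const_mul c
    simpa only [Polynomial.eval_monomial, Real.rpow_natCast, mul_assoc] using this

def gInt (β : ℝ) (hβ : 0 < β) : Polynomial ℝ →ₗ[ℝ] ℝ where
  toFun P := ∫ s : ℝ, P.eval s * Real.exp (-β * s ^ 2)
  map_add' p q := by
    simp only [Polynomial.eval_add, add_mul]
    exact integral_add (integrable_poly_gauss hβ p) (integrable_poly_gauss hβ q)
  map_smul' c p := by
    simp only [Polynomial.eval_smul, smul_eq_mul, mul_assoc, RingHom.id_apply]
    exact integral_const_mul _ _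

theorem gInt_C_mul {β : ℝ} (hβ : 0 < β) (c : ℝ) (P : Polynomial ℝ) :
    gInt β hβ (Polynomial.C c * P) = c * gInt β hβ P := by
  rw [← Polynomial.smul_eq_C_mul, map_smul, smul_eq_mul]

theorem gInt_deriv {β : ℝ} (hβ : 0 < β) (P : Polynomial ℝ) :
    gInt β hβ (Polynomial.derivative P) = 2 * β * gInt β hβ (Polynomial.X * P) := by
  rw [← gInt_C_mul hβ, ← sub_eq_zero, ← map_sub]
  refine integral_eq_zero_of_hasDerivAt_of_integrable
    (f := fun s : ℝ => P.eval s * Real.exp (-β * s ^ 2)) ?_ ?_ (integrable_poly_gauss hβ P)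
  · intro s
    have h1 := P.hasDerivAt s
    have h2 : HasDerivAt (fun s : ℝ => Real.exp (-β * s ^ 2))
        (Real.exp (-β * s ^ 2) * (-β * (2 * s))) s := by
      have := ((hasDerivAt_pow 2 s).const_mul (-β)).exp
      simpa using this
    refine (h1.mul h2).congr_deriv ?_
    simp only [Polynomial.eval_sub, Polynomial.eval_mul, Polynomial.eval_C, Polynomial.eval_X]
    ring
  · exact integrable_poly_gauss hβ _

theorem gInt_sq_nonneg {β : ℝ} (hβ : 0 < β) (P : Polynomial ℝ) : 0 ≤ gInt β hβ (P * P) := by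
  refine integral_nonneg fun s => ?_
  simp only [Polynomial.eval_mul]
  exact mul_nonneg (mul_self_nonneg _) (Real.exp_pos _).le

theorem gInt_sq_pos {β : ℝ} (hβ : 0 < β) (P : Polynomial ℝ) (hP : P ≠ 0) :
    0 < gInt β hβ (P * P) := by
  obtain ⟨x, hx⟩ : ∃ x, P.eval x ≠ 0 := by
    by_contra h
    push Not at h
    exact hP (Polynomial.funext (by simpa using h))
  refine integral_pos_of_integrable_nonneg_nonzero (x := x) ?_ (integrable_poly_gauss hβ _) ?_ ?_
  · exact (Polynomial.continuous _).mul (by fun_prop)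
  · intro s
    simp only [Polynomial.eval_mul]
    exact mul_nonneg (mul_self_nonneg _) (Real.exp_pos _).le
  · simp [hx, (Real.exp_pos _).ne']

theorem gInt_ladder {β : ℝ} (hβ : 0 < β) (d : ℕ) : ∀ P : Polynomial ℝ, P.natDegree ≤ d →
    gInt β hβ (Polynomial.derivative P * Polynomial.derivative P)
      ≤ 2 * β * d * gInt β hβ (P * P) := by
  induction d with
  | zero =>
    intro P hP
    rw [Polynomial.derivative_of_natDegree_zero (by omega)]
    simp
  | succ d ih =>
    intro P hP
    set Q := Polynomial.derivative P with hQ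
    have hQd : Q.natDegree ≤ d := by
      have := Polynomial.natDegree_derivative_le P
      rw [← hQ] at this
      omega
    have h1 := ih Q hQd
    set Q' := Polynomial.derivative Q with hQ'
    have k1 := gInt_deriv hβ (P * Q)
    have k2 := gInt_deriv hβ (Polynomial.X * (Q * Q))
    simp only [Polynomial.derivative_mul, Polynomial.derivative_X, ← hQ, ← hQ', one_mul,
      map_add] at k1 k2
    set α : ℝ := 2 * β * (d + 1) with hα
    have hαp : 0 < α := by positivity
    have k3 := gInt_sq_nonneg hβ (Polynomial.C α * P - (Polynomial.C (2 * β) * (Polynomial.X * Q) - Q'))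
    have e : (Polynomial.C α * P - (Polynomial.C (2 * β) * (Polynomial.X * Q) - Q')) *
        (Polynomial.C α * P - (Polynomial.C (2 * β) * (Polynomial.X * Q) - Q'))
        = Polynomial.C (α * α) * (P * P) - Polynomial.C (2 * α * (2 * β)) * (Polynomial.X * (P * Q))
          + Polynomial.C (2 * α) * (P * Q') + Polynomial.C (2 * β * (2 * β)) * (Polynomial.X * (Polynomial.X * (Q * Q)))
          - Polynomial.C (2 * (2 * β)) * (Polynomial.X * (Q * Q')) + Q' * Q' := by
      simp only [Polynomial.C_mul, Polynomial.C_ofNat]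
      ring
    rw [e] at k3
    have e2 : Polynomial.X * (Q' * Q + Q * Q') = Polynomial.C 2 * (Polynomial.X * (Q * Q')) := by
      simp only [Polynomial.C_ofNat]; ring
    rw [e2] at k2
    simp only [map_add, map_sub, gInt_C_mul] at k3 k2
    push_cast
    have h4 : α * gInt β hβ (Q * Q) ≤ α * (α * gInt β hβ (P * P)) := by
      nlinarith
    have := le_of_mul_le_mul_left h4 hαp
    rw [hα] at this
    linarith

def thC (s : ℝ) : ℝ := Real.smoothTransition (2 - s ^ 2)

theorem thC_contDiff : ContDiff ℝ (⊤ : ℕ∞) thC :=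
  Real.smoothTransition.contDiff.comp (contDiff_const.sub (contDiff_id.pow 2))

theorem thC_zero {s : ℝ} (hs : 2 ≤ |s|) : thC s = 0 := by
  apply Real.smoothTransition.zero_of_nonpos
  have := sq_abs s
  nlinarith

theorem thC_at_zero : thC 0 = 1 := by
  apply Real.smoothTransition.one_of_one_le; norm_num

theorem thC_compact : HasCompactSupport thC :=
  HasCompactSupport.intro (isCompact_Icc (a := -2) (b := 2)) (fun x hx => thC_zero (by
    by_contra h
    push Not at h
    exact hx ⟨(abs_lt.1 h).1.le, (abs_lt.1 h).2.le⟩))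

theorem gCut_tendsto {β : ℝ} (hβ : 0 < β) (p1 p2 p3 : Polynomial ℝ) :
    ContinuousAt (fun e : ℝ => ∫ s : ℝ,
      ((e * deriv thC (e * s)) ^ 2 * p1.eval s + (e * deriv thC (e * s)) * thC (e * s) * p2.eval s
        + thC (e * s) ^ 2 * p3.eval s) * Real.exp (-β * s ^ 2)) 0 := by
  have hdc : Continuous (deriv thC) := thC_contDiff.continuous_deriv (by norm_num)
  have htc : Continuous thC := thC_contDiff.continuous
  obtain ⟨C, hC⟩ := (thC_compact.deriv).exists_bound_of_continuous hdc
  have hC0 : 0 ≤ C := (norm_nonneg _).trans (hC 0)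
  have ht1 : ∀ s, |thC s| ≤ 1 := fun s => by
    unfold thC
    rw [abs_of_nonneg (Real.smoothTransition.nonneg _)]; exact Real.smoothTransition.le_one _
  have hp : ∀ p : Polynomial ℝ, Continuous fun s : ℝ => p.eval s := fun p => p.continuous
  refine continuousAt_of_dominated (bound := fun s => C ^ 2 * |p1.eval s * Real.exp (-β * s ^ 2)| +
    C * |p2.eval s * Real.exp (-β * s ^ 2)| + |p3.eval s * Real.exp (-β * s ^ 2)|) ?_ ?_ ?_ ?_
  · refine Eventually.of_forall fun e => Continuous.aestronglyMeasurable ?_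
    have := hp p1; have := hp p2; have := hp p3
    fun_prop
  · have : ∀ᶠ e : ℝ in nhds 0, |e| < 1 := by
      have := Metric.ball_mem_nhds (0:ℝ) one_pos
      filter_upwards [this] with e he
      simpa [Real.dist_eq] using he
    filter_upwards [this] with e he
    refine ae_of_all _ fun s => ?_
    set u := e * deriv thC (e * s) with hu
    set v := thC (e * s) with hv
    have hub : |u| ≤ C := by
      rw [hu, abs_mul]
      have := hC (e * s)
      rw [Real.norm_eq_abs] at this
      nlinarith [abs_nonneg e, abs_nonneg (deriv thC (e * s))]
    have hvb : |v| ≤ 1 := ht1 _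
    rw [Real.norm_eq_abs]
    set E := Real.exp (-β * s ^ 2)
    have e1 : (u ^ 2 * p1.eval s + u * v * p2.eval s + v ^ 2 * p3.eval s) * E =
      u ^ 2 * (p1.eval s * E) + u * v * (p2.eval s * E) + v ^ 2 * (p3.eval s * E) := by ring
    rw [e1]
    refine (abs_add_three _ _ _).trans ?_
    rw [abs_mul (u ^ 2), abs_mul (u * v), abs_mul (v ^ 2), abs_pow, abs_mul u v, abs_pow]
    have a1 : |u| ^ 2 ≤ C ^ 2 := by gcongr
    have a2 : |u| * |v| ≤ C := by nlinarith [abs_nonneg u, abs_nonneg v]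
    have a3 : |v| ^ 2 ≤ 1 := by nlinarith [abs_nonneg v]
    have b1 := mul_le_mul_of_nonneg_right a1 (abs_nonneg (p1.eval s * E))
    have b2 := mul_le_mul_of_nonneg_right a2 (abs_nonneg (p2.eval s * E))
    have b3 := mul_le_mul_of_nonneg_right a3 (abs_nonneg (p3.eval s * E))
    linarith
  · exact (((integrable_poly_gauss hβ p1).abs.const_mul _).add
      ((integrable_poly_gauss hβ p2).abs.const_mul _)).add (integrable_poly_gauss hβ p3).abs
  · refine ae_of_all _ fun s => Continuous.continuousAt ?_
    fun_prop

def gfun (β e : ℝ) (P : Polynomial ℝ) (s : ℝ) : ℝ :=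
  thC (e * s) * P.eval s * Real.exp (-(β / 2) * s ^ 2)

theorem gfun_contDiff (β e : ℝ) (P : Polynomial ℝ) : ContDiff ℝ (⊤ : ℕ∞) (gfun β e P) := by
  unfold gfun
  refine ((thC_contDiff.comp (contDiff_const.mul contDiff_id)).mul ?_).mul ?_
  · simpa using P.contDiff_aeval (𝕜 := ℝ) (⊤ : ℕ∞)
  · exact Real.contDiff_exp.comp (contDiff_const.mul (contDiff_id.pow 2))

theorem gfun_deriv (β e : ℝ) (P : Polynomial ℝ) (s : ℝ) : deriv (gfun β e P) s =
    ((e * deriv thC (e * s)) * P.eval s + thC (e * s) *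
      (Polynomial.derivative P - Polynomial.C β * Polynomial.X * P).eval s)
      * Real.exp (-(β / 2) * s ^ 2) := by
  have h0 : HasDerivAt (fun s : ℝ => thC (e * s)) (deriv thC (e * s) * e) s := by
    have h := ((thC_contDiff.differentiable (by norm_num)) (e * s)).hasDerivAt
    have h' : HasDerivAt (fun s : ℝ => e * s) e s := by simpa using (hasDerivAt_id s).const_mul e
    exact HasDerivAt.comp (h₂ := thC) (h := fun s : ℝ => e * s) s h h'
  have h1 := P.hasDerivAt s
  have h2 : HasDerivAt (fun s : ℝ => Real.exp (-(β/2) * s ^ 2))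
      (Real.exp (-(β/2) * s ^ 2) * (-(β/2) * (2 * s))) s := by
    have := ((hasDerivAt_pow 2 s).const_mul (-(β/2))).exp
    simpa using this
  have h3 : HasDerivAt (gfun β e P) _ s := (h0.mul h1).mul h2
  rw [h3.deriv]
  simp only [Pi.mul_apply, Polynomial.eval_sub, Polynomial.eval_mul, Polynomial.eval_C, Polynomial.eval_X]
  ring

def gMat (β μ e : ℝ) (P Q : Polynomial ℝ) : ℝ :=
  ∫ s : ℝ, (deriv (gfun β e P) s * deriv (gfun β e Q) s
    + (β ^ 2 * s ^ 2 - μ) * (gfun β e P s * gfun β e Q s))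

theorem gauss_sq (β s : ℝ) : Real.exp (-(β / 2) * s ^ 2) * Real.exp (-(β / 2) * s ^ 2)
    = Real.exp (-β * s ^ 2) := by
  rw [← Real.exp_add]; congr 1; ring

theorem gMat_continuousAt {β : ℝ} (hβ : 0 < β) (μ : ℝ) (P Q : Polynomial ℝ) :
    ContinuousAt (fun e => gMat β μ e P Q) 0 := by
  have := gCut_tendsto hβ (P * Q)
    (P * (Polynomial.derivative Q - Polynomial.C β * Polynomial.X * Q) +
      Q * (Polynomial.derivative P - Polynomial.C β * Polynomial.X * P))
    ((Polynomial.derivative P - Polynomial.C β * Polynomial.X * P) *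
      (Polynomial.derivative Q - Polynomial.C β * Polynomial.X * Q) +
      (Polynomial.C (β ^ 2) * Polynomial.X ^ 2 - Polynomial.C μ) * (P * Q))
  convert this using 2 with e
  unfold gMat
  congr 1; ext s
  rw [gfun_deriv, gfun_deriv, ← gauss_sq β s]
  simp only [gfun, Polynomial.eval_sub, Polynomial.eval_mul, Polynomial.eval_C, Polynomial.eval_X,
    Polynomial.eval_add, Polynomial.eval_pow]
  ring

theorem gMat_zero_neg {β : ℝ} (hβ : 0 < β) {μ : ℝ} {m : ℕ} (hμ : (2 * (m : ℝ) + 1) * β < μ)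
    (P : Polynomial ℝ) (hP : P ≠ 0) (hd : P.natDegree ≤ m) : gMat β μ 0 P P < 0 := by
  have e : gMat β μ 0 P P = gInt β hβ (Polynomial.derivative P * Polynomial.derivative P
      - Polynomial.C (2 * β) * (Polynomial.X * (P * Polynomial.derivative P))
      + Polynomial.C (2 * β * β) * (Polynomial.X * (Polynomial.X * (P * P)))
      - Polynomial.C μ * (P * P)) := by
    unfold gMat gInt
    simp only [LinearMap.coe_mk, AddHom.coe_mk]
    congr 1; ext s
    rw [gfun_deriv, ← gauss_sq β s]
    simp only [gfun, Polynomial.eval_sub, Polynomial.eval_mul, Polynomial.eval_C, Polynomial.eval_X,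
      Polynomial.eval_add, zero_mul, thC_at_zero]
    ring
  have k2 := gInt_deriv hβ (Polynomial.X * (P * P))
  simp only [Polynomial.derivative_mul, Polynomial.derivative_X, one_mul, map_add] at k2
  have e2 : Polynomial.X * (Polynomial.derivative P * P + P * Polynomial.derivative P)
      = Polynomial.C 2 * (Polynomial.X * (P * Polynomial.derivative P)) := by
    simp only [Polynomial.C_ofNat]; ring
  rw [e2] at k2
  rw [e]
  simp only [map_add, map_sub, gInt_C_mul] at k2 ⊢
  have l := gInt_ladder hβ m P hd
  have p := gInt_sq_pos hβ P hP
  nlinarith [mul_pos (sub_pos.2 hμ) p]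

theorem gMat_integrable {β : ℝ} (hβ : 0 < β) (μ e : ℝ) (P Q : Polynomial ℝ) :
    Integrable (fun s : ℝ => deriv (gfun β e P) s * deriv (gfun β e Q) s
      + (β ^ 2 * s ^ 2 - μ) * (gfun β e P s * gfun β e Q s)) := by
  have hdc : Continuous (deriv thC) := thC_contDiff.continuous_deriv (by norm_num)
  have htc : Continuous thC := thC_contDiff.continuous
  obtain ⟨C, hC⟩ := (thC_compact.deriv).exists_bound_of_continuous hdc
  obtain ⟨C', hC'⟩ := thC_compact.exists_bound_of_continuous htc
  have hC0 : 0 ≤ C := (norm_nonneg _).trans (hC 0)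
  have hC0' : 0 ≤ C' := (norm_nonneg _).trans (hC' 0)
  have key : ∀ (b : ℝ → ℝ) (K : ℝ) (p : Polynomial ℝ), Continuous b → (∀ s, ‖b s‖ ≤ K) →
      Integrable (fun s : ℝ => b s * (p.eval s * Real.exp (-β * s ^ 2))) := fun b K p hb hK =>
    (integrable_poly_gauss hβ p).bdd_mul hb.aestronglyMeasurable (ae_of_all _ hK)
  have i1 := key (fun s => (e * deriv thC (e * s)) ^ 2) ((|e| * C) ^ 2) (P * Q) (by fun_prop) (by
    intro s
    rw [norm_pow, norm_mul, Real.norm_eq_abs e]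
    gcongr; exact hC _)
  have i2 := key (fun s => (e * deriv thC (e * s)) * thC (e * s)) ((|e| * C) * C')
    (P * (Polynomial.derivative Q - Polynomial.C β * Polynomial.X * Q) +
      Q * (Polynomial.derivative P - Polynomial.C β * Polynomial.X * P)) (by fun_prop) (by
    intro s
    rw [norm_mul, norm_mul, Real.norm_eq_abs e]
    gcongr
    · exact hC _
    · exact hC' _)
  have i3 := key (fun s => thC (e * s) ^ 2) (C' ^ 2)
    ((Polynomial.derivative P - Polynomial.C β * Polynomial.X * P) *
      (Polynomial.derivative Q - Polynomial.C β * Polynomial.X * Q) +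
      (Polynomial.C (β ^ 2) * Polynomial.X ^ 2 - Polynomial.C μ) * (P * Q)) (by fun_prop) (by
    intro s
    rw [norm_pow]
    gcongr
    exact hC' _)
  refine ((i1.add i2).add i3).congr (ae_of_all _ fun s => ?_)
  simp only [Pi.add_apply]
  rw [gfun_deriv, gfun_deriv, ← gauss_sq β s]
  simp only [gfun, Polynomial.eval_sub, Polynomial.eval_mul, Polynomial.eval_C, Polynomial.eval_X,
    Polynomial.eval_add, Polynomial.eval_pow]
  ring

def pvec {M : ℕ} (c : Fin (M + 1) → ℝ) : Polynomial ℝ :=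
  ∑ k : Fin (M + 1), Polynomial.C (c k) * Polynomial.X ^ (k : ℕ)

theorem pvec_degree {M : ℕ} (c : Fin (M + 1) → ℝ) : (pvec c).natDegree ≤ M := by
  apply Polynomial.natDegree_sum_le_of_forall_le
  intro k _
  exact (Polynomial.natDegree_C_mul_X_pow_le _ _).trans (Nat.lt_succ_iff.1 k.2)

theorem pvec_ne {M : ℕ} (c : Fin (M + 1) → ℝ) (hc : c ≠ 0) : pvec c ≠ 0 := by
  intro h
  apply hc
  ext k
  have := congrArg (fun p => Polynomial.coeff p (k : ℕ)) h
  simp only [pvec, Polynomial.finsetSum_coeff, Polynomial.coeff_C_mul, Polynomial.coeff_X_pow,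
    Polynomial.coeff_zero] at this
  rw [Finset.sum_eq_single k] at this
  · simpa using this
  · intro b _ hb
    have : (k : ℕ) ≠ b := fun h => hb (Fin.ext h.symm)
    simp [this]
  · simp

theorem gfun_pvec {M : ℕ} (β e : ℝ) (c : Fin (M + 1) → ℝ) (s : ℝ) :
    gfun β e (pvec c) s = ∑ k, c k * gfun β e (Polynomial.X ^ (k : ℕ)) s := by
  simp only [gfun, pvec, Polynomial.eval_finsetSum, Polynomial.eval_mul, Polynomial.eval_C,
    Finset.mul_sum, Finset.sum_mul]
  refine Finset.sum_congr rfl fun k _ => ?_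
  ring

theorem gfun_pvec_deriv {M : ℕ} (β e : ℝ) (c : Fin (M + 1) → ℝ) (s : ℝ) :
    deriv (gfun β e (pvec c)) s = ∑ k, c k * deriv (gfun β e (Polynomial.X ^ (k : ℕ))) s := by
  have : gfun β e (pvec c) = fun s => ∑ k, c k * gfun β e (Polynomial.X ^ (k : ℕ)) s :=
    funext (gfun_pvec β e c)
  rw [this]
  have hd : ∀ k : Fin (M+1), HasDerivAt (fun s => c k * gfun β e (Polynomial.X ^ (k : ℕ)) s)
      (c k * deriv (gfun β e (Polynomial.X ^ (k : ℕ))) s) s := fun k =>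
    ((((gfun_contDiff β e _).differentiable (by norm_num)) s).hasDerivAt).const_mul _
  exact (HasDerivAt.fun_sum fun k _ => hd k).deriv

theorem gMat_pvec {M : ℕ} {β : ℝ} (hβ : 0 < β) (μ e : ℝ) (c : Fin (M + 1) → ℝ) :
    gMat β μ e (pvec c) (pvec c) = ∑ j, ∑ k, c j * c k *
      gMat β μ e (Polynomial.X ^ (j : ℕ)) (Polynomial.X ^ (k : ℕ)) := by
  unfold gMat
  simp only [← integral_const_mul]
  have hi : ∀ j k : Fin (M+1), Integrable (fun s : ℝ => c j * c k *
    (deriv (gfun β e (Polynomial.X ^ (j : ℕ))) s * deriv (gfun β e (Polynomial.X ^ (k : ℕ))) s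
      + (β ^ 2 * s ^ 2 - μ) * (gfun β e (Polynomial.X ^ (j : ℕ)) s * gfun β e (Polynomial.X ^ (k : ℕ)) s))) :=
    fun j k => (gMat_integrable hβ μ e _ _).const_mul _
  rw [← (funext fun j => integral_finsetSum (μ := volume) Finset.univ (fun k _ => hi j k) :
    (fun j => _) = fun j => _), ← integral_finsetSum]
  · congr 1; ext s
    rw [gfun_pvec_deriv, gfun_pvec, Finset.sum_mul_sum, Finset.sum_mul_sum, Finset.mul_sum,
      ← Finset.sum_add_distrib]
    refine Finset.sum_congr rfl fun j _ => ?_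
    rw [Finset.mul_sum, ← Finset.sum_add_distrib]
    refine Finset.sum_congr rfl fun k _ => ?_
    ring
  · intro j _
    exact integrable_finsetSum _ fun k _ => hi j k

theorem oscillator_real {β : ℝ} (hβ : 0 < β) {μ : ℝ} {M : ℕ} (hμ : (2 * (M : ℝ) + 1) * β < μ) :
    ∃ e : ℝ, 0 < e ∧ ∀ c : Fin (M + 1) → ℝ, c ≠ 0 → gMat β μ e (pvec c) (pvec c) < 0 := by
  have hsph : IsCompact (Metric.sphere (0 : Fin (M+1) → ℝ) 1) := isCompact_sphere _ _
  have hev := hsph.eventually_forall_of_forall_eventually (x₀ := (0:ℝ))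
    (P := fun e c => ∑ j, ∑ k, c j * c k *
      gMat β μ e (Polynomial.X ^ (j : ℕ)) (Polynomial.X ^ (k : ℕ)) < 0) (by
    intro c hc
    have hc0 : c ≠ 0 := by
      intro h
      rw [h] at hc
      simp at hc
    have hneg := gMat_zero_neg hβ hμ _ (pvec_ne c hc0) (pvec_degree c)
    rw [gMat_pvec hβ] at hneg
    have hcont : ContinuousAt (fun z : ℝ × (Fin (M+1) → ℝ) => ∑ j, ∑ k, z.2 j * z.2 k *
      gMat β μ z.1 (Polynomial.X ^ (j : ℕ)) (Polynomial.X ^ (k : ℕ))) (0, c) := by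
      refine tendsto_finsetSum _ fun j _ => tendsto_finsetSum _ fun k _ => ?_
      refine Tendsto.mul (Continuous.tendsto (by fun_prop) _) ?_
      have h1 := gMat_continuousAt hβ μ (Polynomial.X ^ (j : ℕ)) (Polynomial.X ^ (k : ℕ))
      exact ContinuousAt.comp (f := Prod.fst) (x := ((0:ℝ), c)) h1 continuousAt_fst
    exact hcont.eventually_lt continuousAt_const hneg)
  obtain ⟨r, hr, hr2⟩ := Metric.eventually_nhds_iff.1 hev
  refine ⟨r / 2, by positivity, ?_⟩
  intro c hc
  have h1 := hr2 (y := r / 2) (by rw [Real.dist_eq, sub_zero, abs_of_pos (by positivity)]; linarith)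
    (‖c‖⁻¹ • c) (by simp [norm_smul, hc])
  rw [gMat_pvec hβ]
  have hn : 0 < ‖c‖ := norm_pos_iff.2 hc
  have e : ∑ j, ∑ k, c j * c k * gMat β μ (r/2) (Polynomial.X ^ (j : ℕ)) (Polynomial.X ^ (k : ℕ))
      = ‖c‖ ^ 2 * ∑ j, ∑ k, (‖c‖⁻¹ • c) j * (‖c‖⁻¹ • c) k *
        gMat β μ (r/2) (Polynomial.X ^ (j : ℕ)) (Polynomial.X ^ (k : ℕ)) := by
    simp only [Finset.mul_sum, Pi.smul_apply, smul_eq_mul]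
    refine Finset.sum_congr rfl fun j _ => Finset.sum_congr rfl fun k _ => ?_
    field_simp
  rw [e]
  exact mul_neg_of_pos_of_neg (by positivity) h1

theorem oscillator_complex {β : ℝ} (hβ : 0 < β) {μ : ℝ} {M : ℕ} (hμ : (2 * (M : ℝ) + 1) * β < μ) :
    ∃ (g : Fin (M + 1) → ℝ → ℝ) (ρ : ℝ), 0 < ρ ∧ (∀ k, ContDiff ℝ (⊤ : ℕ∞) (g k)) ∧
      (∀ k s, ρ ≤ |s| → g k s = 0) ∧
      ∀ c : Fin (M + 1) → ℂ, c ≠ 0 → ∫ s : ℝ, (‖∑ k, c k * ((deriv (g k) s : ℝ) : ℂ)‖ ^ 2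
        + (β ^ 2 * s ^ 2 - μ) * ‖∑ k, c k * (g k s : ℂ)‖ ^ 2) < 0 := by
  obtain ⟨e, he, hneg⟩ := oscillator_real hβ hμ
  refine ⟨fun k => gfun β e (Polynomial.X ^ (k : ℕ)), 2 / e, by positivity, fun k => gfun_contDiff _ _ _,
    ?_, ?_⟩
  · intro k s hs
    have : thC (e * s) = 0 := by
      apply thC_zero
      rw [abs_mul, abs_of_pos he]
      rwa [div_le_iff₀' he] at hs
    simp [gfun, this]
  · intro c hc
    set cr : Fin (M+1) → ℝ := fun k => (c k).re with hcr
    set ci : Fin (M+1) → ℝ := fun k => (c k).im with hci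
    have hre : ∀ d : Fin (M+1) → ℝ, (∑ k, c k * (d k : ℂ)).re = ∑ k, cr k * d k := by
      intro d; simp [Complex.re_sum, hcr]
    have him : ∀ d : Fin (M+1) → ℝ, (∑ k, c k * (d k : ℂ)).im = ∑ k, ci k * d k := by
      intro d; simp [Complex.im_sum, hci]
    have hns : ∀ d : Fin (M+1) → ℝ, ‖∑ k, c k * (d k : ℂ)‖ ^ 2 =
        (∑ k, cr k * d k) * (∑ k, cr k * d k) + (∑ k, ci k * d k) * (∑ k, ci k * d k) := by
      intro d
      rw [Complex.sq_norm, Complex.normSq_apply, hre, him]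
    have hsum : ∫ s : ℝ, (‖∑ k, c k * ((deriv (gfun β e (Polynomial.X ^ (k : ℕ))) s : ℝ) : ℂ)‖ ^ 2
        + (β ^ 2 * s ^ 2 - μ) * ‖∑ k, c k * (gfun β e (Polynomial.X ^ (k : ℕ)) s : ℂ)‖ ^ 2)
        = gMat β μ e (pvec cr) (pvec cr) + gMat β μ e (pvec ci) (pvec ci) := by
      unfold gMat
      rw [← integral_add (gMat_integrable hβ μ e _ _) (gMat_integrable hβ μ e _ _)]
      congr 1; ext s
      rw [hns (fun k => deriv (gfun β e (Polynomial.X ^ (k : ℕ))) s),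
        hns (fun k => gfun β e (Polynomial.X ^ (k : ℕ)) s)]
      simp only [gfun_pvec_deriv, gfun_pvec]
      ring
    rw [hsum]
    have hz : ∀ d : Fin (M+1) → ℝ, gMat β μ e (pvec d) (pvec d) ≤ 0 := by
      intro d
      by_cases hd : d = 0
      · rw [gMat_pvec hβ, hd]; simp
      · exact (hneg d hd).le
    by_cases h1 : cr = 0
    · have h2 : ci ≠ 0 := by
        intro h2
        apply hc
        ext k
        exact Complex.ext (congrFun h1 k) (congrFun h2 k)
      linarith [hz cr, hneg ci h2]
    · linarith [hz ci, hneg cr h1]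

theorem cs_interval {g : ℝ → ℝ} {a b : ℝ} (hab : a < b) (hg : Continuous g) :
    (∫ x in a..b, g x) ^ 2 ≤ (b - a) * ∫ x in a..b, g x ^ 2 := by
  set m := ∫ x in a..b, g x with hm
  have hpos : 0 < b - a := by linarith
  have h0 : 0 ≤ ∫ x in a..b, ((b - a) * g x - m) ^ 2 :=
    intervalIntegral.integral_nonneg hab.le (fun x _ => sq_nonneg _)
  have e : ∫ x in a..b, ((b - a) * g x - m) ^ 2
      = (b - a) ^ 2 * (∫ x in a..b, g x ^ 2) - 2 * (b - a) * m * m + (b - a) * m ^ 2 := by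
    have : ∀ x, ((b - a) * g x - m) ^ 2 = (b - a) ^ 2 * g x ^ 2 - 2 * (b - a) * m * g x + m ^ 2 := by
      intro x; ring
    simp only [this]
    rw [intervalIntegral.integral_add, intervalIntegral.integral_sub,
      intervalIntegral.integral_const_mul, intervalIntegral.integral_const_mul,
      intervalIntegral.integral_const]
    · simp [hm]
    all_goals exact Continuous.intervalIntegrable (by fun_prop) _ _
  rw [e] at h0
  have : 0 ≤ (b - a) * ((b - a) * (∫ x in a..b, g x ^ 2) - m ^ 2) := by nlinarith
  have := nonneg_of_mul_nonneg_right this hpos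
  linarith

theorem cs_interval_c {f : ℝ → ℂ} {a b : ℝ} (hab : a < b) (hf : Continuous f) :
    ‖∫ x in a..b, f x‖ ^ 2 ≤ (b - a) * ∫ x in a..b, ‖f x‖ ^ 2 := by
  refine le_trans ?_ (cs_interval hab hf.norm)
  gcongr
  exact intervalIntegral.norm_integral_le_integral_norm hab.le

theorem poinc1 {f f' : ℝ → ℂ} {a b : ℝ} (hab : a < b) (hf : ∀ x, HasDerivAt f (f' x) x)
    (hf' : Continuous f') :
    ∫ x in a..b, ‖f x‖ ^ 2 ≤ 2 * (b - a) ^ 2 * (∫ x in a..b, ‖f' x‖ ^ 2)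
      + 2 / (b - a) * ‖∫ x in a..b, f x‖ ^ 2 := by
  have hc : Continuous f := continuous_iff_continuousAt.2 fun x => (hf x).continuousAt
  have hpos : 0 < b - a := by linarith
  set G := ∫ x in a..b, ‖f' x‖ with hG
  set D := ∫ x in a..b, ‖f' x‖ ^ 2 with hD
  set m := ∫ x in a..b, f x with hm
  have hGD : G ^ 2 ≤ (b - a) * D := cs_interval hab hf'.norm
  have hG0 : 0 ≤ G := intervalIntegral.integral_nonneg hab.le (fun x _ => norm_nonneg _)
  have hdiff : ∀ x ∈ Set.Icc a b, ∀ y ∈ Set.Icc a b, ‖f x - f y‖ ≤ G := by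
    intro x hx y hy
    rw [← intervalIntegral.integral_eq_sub_of_hasDerivAt (fun z _ => hf z)
      (hf'.intervalIntegrable _ _)]
    refine (intervalIntegral.norm_integral_le_abs_integral_norm).trans ?_
    rw [← abs_of_nonneg hG0]
    apply intervalIntegral.abs_integral_mono_interval
    · rw [Set.uIoc_of_le hab.le]
      intro z hz
      rw [Set.mem_uIoc] at hz
      rcases hz with h | h
      · exact ⟨lt_of_le_of_lt hy.1 h.1, h.2.trans hx.2⟩
      · exact ⟨lt_of_le_of_lt hx.1 h.1, h.2.trans hy.2⟩
    · exact Filter.Eventually.of_forall fun z => norm_nonneg _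
    · exact hf'.norm.intervalIntegrable _ _
  have hpt : ∀ x ∈ Set.Icc a b, ‖f x‖ ^ 2 ≤ 2 * (b - a) * D + 2 / (b - a) ^ 2 * ‖m‖ ^ 2 := by
    intro x hx
    have e : ((b - a : ℝ) : ℂ) * f x = m + ∫ y in a..b, (f x - f y) := by
      rw [intervalIntegral.integral_sub (by simp) (hc.intervalIntegrable _ _)]
      simp [hm]
    have h1 : ‖∫ y in a..b, (f x - f y)‖ ≤ G * |b - a| :=
      intervalIntegral.norm_integral_le_of_norm_le_const (fun y hy => by
        rw [Set.uIoc_of_le hab.le] at hy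
        exact hdiff x hx y ⟨hy.1.le, hy.2⟩)
    rw [abs_of_pos hpos] at h1
    have h2 : (b - a) * ‖f x‖ ≤ ‖m‖ + G * (b - a) := by
      have := congrArg norm e
      rw [norm_mul, Complex.norm_real, Real.norm_of_nonneg hpos.le] at this
      rw [this]
      exact (norm_add_le _ _).trans (by linarith)
    have h3 : ‖f x‖ ≤ ‖m‖ / (b - a) + G := by
      rw [← mul_le_mul_iff_right₀ hpos]
      refine h2.trans (le_of_eq ?_); field_simp
    have h4 : ‖f x‖ ^ 2 ≤ (‖m‖ / (b - a) + G) ^ 2 := by gcongr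
    have h5 : (‖m‖ / (b - a) + G) ^ 2 ≤ 2 * (‖m‖ / (b - a)) ^ 2 + 2 * G ^ 2 := by
      nlinarith [sq_nonneg (‖m‖ / (b - a) - G)]
    have h6 : 2 * (‖m‖ / (b - a)) ^ 2 = 2 / (b - a) ^ 2 * ‖m‖ ^ 2 := by field_simp
    nlinarith
  have := intervalIntegral.integral_mono_on (μ := volume) (g := fun _ => 2 * (b - a) * D + 2 / (b - a) ^ 2 * ‖m‖ ^ 2) hab.le
    ((hc.norm.pow 2).intervalIntegrable a b) (by simp) hpt
  refine this.trans (le_of_eq ?_)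
  rw [intervalIntegral.integral_const]
  simp only [smul_eq_mul]
  field_simp

theorem poincN {f f' : ℝ → ℂ} {a h : ℝ} (n : ℕ) (hh : 0 < h) (hf : ∀ x, HasDerivAt f (f' x) x)
    (hf' : Continuous f') :
    ∫ x in a..(a + n * h), ‖f x‖ ^ 2 ≤ 2 * h ^ 2 * (∫ x in a..(a + n * h), ‖f' x‖ ^ 2)
      + 2 / h * ∑ i ∈ Finset.range n, ‖∫ x in (a + i * h)..(a + (i + 1 : ℕ) * h), f x‖ ^ 2 := by
  have hc : Continuous f := continuous_iff_continuousAt.2 fun x => (hf x).continuousAt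
  have s : ∀ g : ℝ → ℝ, Continuous g → ∫ x in a..(a + n * h), g x
      = ∑ i ∈ Finset.range n, ∫ x in (a + i * h)..(a + (i + 1 : ℕ) * h), g x := by
    intro g hg
    rw [intervalIntegral.sum_integral_adjacent_intervals (a := fun i : ℕ => a + i * h)
      (fun i _ => hg.intervalIntegrable _ _)]
    simp
  rw [s (fun x => ‖f x‖ ^ 2) (hc.norm.pow 2), s (fun x => ‖f' x‖ ^ 2) (hf'.norm.pow 2), Finset.mul_sum, Finset.mul_sum,
    ← Finset.sum_add_distrib]
  refine Finset.sum_le_sum fun i _ => ?_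
  have := poinc1 (a := a + i * h) (b := a + (i + 1 : ℕ) * h) (by push_cast; linarith) hf hf'
  have e : a + (i + 1 : ℕ) * h - (a + i * h) = h := by push_cast; ring
  rwa [e] at this

theorem test_dX {u : ℝ × ℝ → ℂ} (hu : ContDiff ℝ (⊤ : ℕ∞) u) (x t : ℝ) :
    HasDerivAt (fun x => u (x, t)) (dX u (x, t)) x := by
  have h := ((hu.differentiable (by norm_num)) (x, t)).hasFDerivAt
  have h2 : HasDerivAt (fun x : ℝ => (x, t)) ((1, 0) : ℝ × ℝ) x :=
    (hasDerivAt_id x).prodMk (hasDerivAt_const x t)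
  exact h.comp_hasDerivAt x h2

theorem test_dY {u : ℝ × ℝ → ℂ} (hu : ContDiff ℝ (⊤ : ℕ∞) u) (x t : ℝ) :
    HasDerivAt (fun t => u (x, t)) (dY u (x, t)) t := by
  have h := ((hu.differentiable (by norm_num)) (x, t)).hasFDerivAt
  have h2 : HasDerivAt (fun t : ℝ => (x, t)) ((0, 1) : ℝ × ℝ) t :=
    (hasDerivAt_const t x).prodMk (hasDerivAt_id t)
  exact h.comp_hasDerivAt t h2

theorem dX_cont {u : ℝ × ℝ → ℂ} (hu : ContDiff ℝ (⊤ : ℕ∞) u) : Continuous (dX u) :=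
  (hu.continuous_fderiv (by norm_num)).clm_apply continuous_const

theorem dY_cont {u : ℝ × ℝ → ℂ} (hu : ContDiff ℝ (⊤ : ℕ∞) u) : Continuous (dY u) :=
  (hu.continuous_fderiv (by norm_num)).clm_apply continuous_const

theorem dX_cpt {u : ℝ × ℝ → ℂ} (hu : HasCompactSupport u) : HasCompactSupport (dX u) :=
  hu.fderiv_apply ℝ (1, 0)

theorem dY_cpt {u : ℝ × ℝ → ℂ} (hu : HasCompactSupport u) : HasCompactSupport (dY u) :=
  hu.fderiv_apply ℝ (0, 1)

theorem par_int_cont {E : Type*} [NormedAddCommGroup E] [NormedSpace ℝ E] {g : ℝ × ℝ → E} (hg : Continuous g) (a b : ℝ) :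
    Continuous fun t => ∫ x in a..b, g (x, t) :=
  intervalIntegral.continuous_parametric_intervalIntegral_of_continuous' (μ := volume)
    (f := fun t x => g (x, t)) (by unfold Function.uncurry; fun_prop) a b

theorem par_int_deriv {u : ℝ × ℝ → ℂ} (hu : ContDiff ℝ (⊤ : ℕ∞) u) (hc : HasCompactSupport u)
    (a b t : ℝ) :
    HasDerivAt (fun t => ∫ x in a..b, u (x, t)) (∫ x in a..b, dY u (x, t)) t := by
  obtain ⟨C, hC⟩ := (dY_cpt hc).exists_bound_of_continuous (dY_cont hu)
  have hcu := hu.continuous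
  have hcy := dY_cont hu
  refine (intervalIntegral.hasDerivAt_integral_of_dominated_loc_of_deriv_le
    (F := fun t x => u (x, t)) (F' := fun t x => dY u (x, t)) (bound := fun _ => C)
    (s := Set.univ) (x₀ := t) Filter.univ_mem ?_ ?_ ?_ ?_ ?_ ?_).2
  · exact Filter.Eventually.of_forall fun s => Continuous.aestronglyMeasurable (by fun_prop)
  · exact Continuous.intervalIntegrable (by fun_prop) _ _
  · exact Continuous.aestronglyMeasurable (by fun_prop)
  · exact Filter.Eventually.of_forall fun s _ x _ => hC _
  · simp
  · exact Filter.Eventually.of_forall fun x _ s _ => test_dY hu x s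

theorem poinc2 {u : ℝ × ℝ → ℂ} (hu : ContDiff ℝ (⊤ : ℕ∞) u) (hc : HasCompactSupport u)
    {a c h k : ℝ} (n : ℕ) (hh : 0 < h) (hk : 0 < k)
    (hz : ∀ i < n, ∀ j < n, ∫ t in (c + j * k)..(c + (j + 1 : ℕ) * k),
      ∫ x in (a + i * h)..(a + (i + 1 : ℕ) * h), u (x, t) = 0) :
    ∫ t in c..(c + n * k), ∫ x in a..(a + n * h), ‖u (x, t)‖ ^ 2 ≤
      2 * h ^ 2 * (∫ t in c..(c + n * k), ∫ x in a..(a + n * h), ‖dX u (x, t)‖ ^ 2)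
      + 4 * k ^ 2 * (∫ t in c..(c + n * k), ∫ x in a..(a + n * h), ‖dY u (x, t)‖ ^ 2) := by
  have hcu := hu.continuous
  have hcx := dX_cont hu
  have hcy := dY_cont hu
  have hnk : c ≤ c + n * k := by have : 0 ≤ (n : ℝ) * k := by positivity
                                 linarith
  set m : ℕ → ℝ → ℂ := fun i t => ∫ x in (a + i * h)..(a + (i + 1 : ℕ) * h), u (x, t) with hm
  set m' : ℕ → ℝ → ℂ := fun i t => ∫ x in (a + i * h)..(a + (i + 1 : ℕ) * h), dY u (x, t) with hm'
  have hmd : ∀ i t, HasDerivAt (m i) (m' i t) t := fun i t => par_int_deriv hu hc _ _ t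
  have hmc' : ∀ i, Continuous (m' i) := fun i => par_int_cont hcy _ _
  have hmc : ∀ i, Continuous (m i) := fun i => par_int_cont hcu _ _
  have c1 : Continuous fun t => ∫ x in a..(a + n * h), ‖u (x, t)‖ ^ 2 :=
    par_int_cont (g := fun p => ‖u p‖ ^ 2) (by fun_prop) _ _
  have c2 : Continuous fun t => ∫ x in a..(a + n * h), ‖dX u (x, t)‖ ^ 2 :=
    par_int_cont (g := fun p => ‖dX u p‖ ^ 2) (by fun_prop) _ _
  have c3 : ∀ i j, Continuous fun t => ∫ x in i..j, ‖dY u (x, t)‖ ^ 2 := fun i j =>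
    par_int_cont (g := fun p => ‖dY u p‖ ^ 2) (by fun_prop) _ _
  have s1 : ∫ t in c..(c + n * k), ∫ x in a..(a + n * h), ‖u (x, t)‖ ^ 2 ≤
      ∫ t in c..(c + n * k), (2 * h ^ 2 * (∫ x in a..(a + n * h), ‖dX u (x, t)‖ ^ 2)
        + 2 / h * ∑ i ∈ Finset.range n, ‖m i t‖ ^ 2) := by
    refine intervalIntegral.integral_mono_on hnk (c1.intervalIntegrable _ _) ?_ ?_
    · exact Continuous.intervalIntegrable (by fun_prop) _ _
    · intro t _
      exact poincN n hh (fun x => test_dX hu x t) (by fun_prop)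
  refine s1.trans ?_
  rw [intervalIntegral.integral_add (Continuous.intervalIntegrable (by fun_prop) _ _)
    (Continuous.intervalIntegrable (by fun_prop) _ _), intervalIntegral.integral_const_mul,
    intervalIntegral.integral_const_mul, intervalIntegral.integral_finsetSum
      (fun i _ => Continuous.intervalIntegrable (by have := hmc i; fun_prop) _ _)]
  refine add_le_add le_rfl ?_
  have s2 : ∀ i ∈ Finset.range n, ∫ t in c..(c + n * k), ‖m i t‖ ^ 2 ≤
      2 * k ^ 2 * ∫ t in c..(c + n * k), h * ∫ x in (a + i * h)..(a + (i + 1 : ℕ) * h), ‖dY u (x, t)‖ ^ 2 := by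
    intro i hi
    have := poincN (a := c) n hk (hmd i) (hmc' i)
    have z : ∑ j ∈ Finset.range n, ‖∫ t in (c + j * k)..(c + (j + 1 : ℕ) * k), m i t‖ ^ 2 = 0 := by
      refine Finset.sum_eq_zero fun j hj => ?_
      rw [hm]; simp only []
      rw [hz i (Finset.mem_range.1 hi) j (Finset.mem_range.1 hj)]; simp
    rw [z, mul_zero, add_zero] at this
    refine this.trans ?_
    gcongr
    refine intervalIntegral.integral_mono_on hnk
      (Continuous.intervalIntegrable (by have := hmc' i; fun_prop) _ _)
      (Continuous.intervalIntegrable (by have := c3 (a + i * h) (a + (i + 1 : ℕ) * h); fun_prop) _ _) ?_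
    intro t _
    have := cs_interval_c (f := fun x => dY u (x, t)) (a := a + i * h) (b := a + (i + 1 : ℕ) * h)
      (by push_cast; linarith) (by fun_prop)
    have e : a + (i + 1 : ℕ) * h - (a + i * h) = h := by push_cast; ring
    rwa [e] at this
  have s3 : ∑ i ∈ Finset.range n, (∫ t in c..(c + n * k), h * ∫ x in (a + i * h)..(a + (i + 1 : ℕ) * h), ‖dY u (x, t)‖ ^ 2)
      = h * ∫ t in c..(c + n * k), ∫ x in a..(a + n * h), ‖dY u (x, t)‖ ^ 2 := by
    simp only [intervalIntegral.integral_const_mul]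
    rw [← Finset.mul_sum, ← intervalIntegral.integral_finsetSum (fun i _ => (c3 _ _).intervalIntegrable _ _)]
    congr 1
    apply intervalIntegral.integral_congr
    intro t _
    simp only []
    rw [intervalIntegral.sum_integral_adjacent_intervals (a := fun i : ℕ => a + i * h)
      (fun i _ => Continuous.intervalIntegrable (by fun_prop) _ _)]
    simp
  calc 2 / h * ∑ i ∈ Finset.range n, ∫ t in c..(c + n * k), ‖m i t‖ ^ 2
      ≤ 2 / h * ∑ i ∈ Finset.range n, (2 * k ^ 2 * ∫ t in c..(c + n * k), h * ∫ x in (a + i * h)..(a + (i + 1 : ℕ) * h), ‖dY u (x, t)‖ ^ 2) := by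
        gcongr with i hi; exact s2 i hi
    _ = _ := by rw [← Finset.mul_sum, s3]; field_simp; norm_num; ring

theorem intOnK {E : Type*} [NormedAddCommGroup E] {g : ℝ × ℝ → E}
    (hg : Continuous g) (a b c d : ℝ) : IntegrableOn g (Set.Ioo a b ×ˢ Set.Ioo c d) :=
  (hg.continuousOn.integrableOn_compact (isCompact_Icc.prod isCompact_Icc)).mono_set
    (Set.prod_mono Set.Ioo_subset_Icc_self Set.Ioo_subset_Icc_self)

theorem intK {E : Type*} [NormedAddCommGroup E] [NormedSpace ℝ E] {g : ℝ × ℝ → E}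
    (hg : Continuous g) {a b c d : ℝ} (hab : a ≤ b) (hcd : c ≤ d) :
    ∫ p in Set.Ioo a b ×ˢ Set.Ioo c d, g p = ∫ t in c..d, ∫ x in a..b, g (x, t) := by
  have h := intOnK hg a b c d
  rw [IntegrableOn, Measure.volume_eq_prod, ← Measure.prod_restrict] at h
  rw [Measure.volume_eq_prod, ← Measure.prod_restrict, integral_prod_symm _ h,
    intervalIntegral.integral_of_le hcd, integral_Ioc_eq_integral_Ioo]
  congr 1; ext t
  rw [intervalIntegral.integral_of_le hab, integral_Ioc_eq_integral_Ioo]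

theorem mag_lower (z w : ℂ) (A : ℝ) :
    1 / 2 * ‖z‖ ^ 2 - A ^ 2 * ‖w‖ ^ 2 ≤ ‖-Complex.I * z - (A : ℂ) * w‖ ^ 2 := by
  have h : ‖z‖ ≤ ‖-Complex.I * z - (A : ℂ) * w‖ + |A| * ‖w‖ := by
    have e : ‖z‖ = ‖(-Complex.I * z - (A : ℂ) * w) + (A : ℂ) * w‖ := by simp
    have e2 : |A| * ‖w‖ = ‖(A : ℂ) * w‖ := by simp
    rw [e2]; exact e.le.trans (norm_add_le _ _)
  set N := ‖-Complex.I * z - (A : ℂ) * w‖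
  have h1 : ‖z‖ ^ 2 ≤ (N + |A| * ‖w‖) ^ 2 := by gcongr
  have h2 : (|A| * ‖w‖) ^ 2 = A ^ 2 * ‖w‖ ^ 2 := by rw [mul_pow, sq_abs]
  nlinarith [sq_nonneg (N - |A| * ‖w‖)]

theorem Azero_cont (t₀ b₀ : ℝ) : Continuous (Azero t₀ b₀) := by unfold Azero; fun_prop

theorem lin_ker_bound {F ι : Type*} [AddCommGroup F] [Module ℂ F] [Fintype ι] (V : Submodule ℂ F)
    (L : V →ₗ[ℂ] (ι → ℂ)) (hL : ∀ u : V, L u = 0 → u = 0) : Module.finrank ℂ V ≤ Fintype.card ι := by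
  have : Function.Injective L := by
    rw [← LinearMap.ker_eq_bot, LinearMap.ker_eq_bot']
    exact hL
  have := LinearMap.finrank_le_finrank_of_injective this
  simpa using this

set_option maxHeartbeats 3200000 in
theorem bdd_count {x₀ t₀ a ε₀ b₀ lam : ℝ} (ha : 0 < a) (hε : 0 < ε₀) :
    BddAbove {n : ℕ | ∃ V : Submodule ℂ (ℝ × ℝ → ℂ),
      (V : Set (ℝ × ℝ → ℂ)) ⊆ {w | IsTestOn (Krect x₀ t₀ a ε₀) w} ∧
      Module.finrank ℂ V = n ∧ ∀ u ∈ V, u ≠ 0 → qK0 x₀ t₀ a ε₀ b₀ u <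
        lam * ∫ p in Krect x₀ t₀ a ε₀, ‖u p‖ ^ 2} := by
  set E := Real.exp t₀ with hE
  have hE0 : 0 < E := Real.exp_pos _
  set xa := x₀ - ε₀ * a * E / 2 with hxa
  set ta := t₀ - ε₀ / 2 with hta
  set M := (ε₀ / 2) ^ 2 * b₀ ^ 2 with hM
  have hM0 : 0 ≤ M := by positivity
  set W := ε₀ * a * E with hW
  have hW0 : 0 < W := by positivity
  set Cst := (M + |lam|) * (4 * W ^ 2 / E ^ 2 + 4 * ε₀ ^ 2) with hCst
  have hML : 0 ≤ M + |lam| := by positivity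
  obtain ⟨n, hn⟩ := exists_nat_ge (Cst + 1)
  have hn1 : (1 : ℝ) ≤ n := by
    have : 0 ≤ Cst := by positivity
    linarith
  have hn0 : (0 : ℝ) < n := by linarith
  set h := W / n with hh
  set k := ε₀ / n with hk
  have hh0 : 0 < h := by positivity
  have hk0 : 0 < k := by positivity
  have hnh : (n : ℝ) * h = W := by rw [hh]; field_simp
  have hnk : (n : ℝ) * k = ε₀ := by rw [hk]; field_simp
  have hn2 : Cst ≤ (n : ℝ) ^ 2 := by nlinarith
  have b1 : (M + |lam|) * (2 * h ^ 2) ≤ E ^ 2 / 2 := by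
    have : (M + |lam|) * (4 * W ^ 2 / E ^ 2) ≤ n ^ 2 := by
      refine le_trans ?_ hn2
      rw [hCst]; gcongr; linarith [sq_nonneg ε₀]
    rw [hh, div_pow]
    have e : (M + |lam|) * (2 * (W ^ 2 / n ^ 2)) = ((M + |lam|) * (4 * W ^ 2 / E ^ 2)) * (E ^ 2 / (2 * n ^ 2)) := by
      field_simp; ring
    rw [e]
    calc _ ≤ (n : ℝ) ^ 2 * (E ^ 2 / (2 * n ^ 2)) := by gcongr
      _ = _ := by field_simp
  have b2 : (M + |lam|) * (4 * k ^ 2) ≤ 1 := by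
    have : (M + |lam|) * (4 * ε₀ ^ 2) ≤ n ^ 2 := by
      refine le_trans ?_ hn2
      rw [hCst]; gcongr
      have : 0 ≤ 4 * W ^ 2 / E ^ 2 := by positivity
      linarith
    rw [hk, div_pow]
    have e : (M + |lam|) * (4 * (ε₀ ^ 2 / n ^ 2)) = ((M + |lam|) * (4 * ε₀ ^ 2)) / n ^ 2 := by
      field_simp
    rw [e, div_le_one (by positivity)]
    exact this
  have hKe : Krect x₀ t₀ a ε₀ = Set.Ioo xa (xa + n * h) ×ˢ Set.Ioo ta (ta + n * k) := by
    unfold Krect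
    rw [hnh, hnk]
    congr 2
    · rw [hxa, hW]; ring
    · rw [hta]; ring
  have hKm : MeasurableSet (Krect x₀ t₀ a ε₀) := by
    rw [hKe]; exact measurableSet_Ioo.prod measurableSet_Ioo
  refine ⟨Fintype.card (Fin n × Fin n), ?_⟩
  rintro N ⟨V, hV, rfl, hneg⟩
  let L : V →ₗ[ℂ] (Fin n × Fin n → ℂ) :=
    { toFun := fun u ij => ∫ t in (ta + (ij.2 : ℕ) * k)..(ta + ((ij.2 : ℕ) + 1 : ℕ) * k),
        ∫ x in (xa + (ij.1 : ℕ) * h)..(xa + ((ij.1 : ℕ) + 1 : ℕ) * h), (u : ℝ × ℝ → ℂ) (x, t)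
      map_add' := by
        intro u v
        ext ij
        have hu := (hV u.2).1.continuous
        have hv := (hV v.2).1.continuous
        simp only [Submodule.coe_add, Pi.add_apply]
        rw [← intervalIntegral.integral_add ((par_int_cont hu _ _).intervalIntegrable _ _)
          ((par_int_cont hv _ _).intervalIntegrable _ _)]
        apply intervalIntegral.integral_congr
        intro t _
        exact intervalIntegral.integral_add (Continuous.intervalIntegrable (by fun_prop) _ _)
          (Continuous.intervalIntegrable (by fun_prop) _ _)
      map_smul' := by
        intro c u
        ext ij
        simp only [Submodule.coe_smul, Pi.smul_apply, smul_eq_mul, RingHom.id_apply,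
          intervalIntegral.integral_const_mul] }
  apply lin_ker_bound V L
  intro u hLu
  by_contra hne
  obtain ⟨hus, huc, -⟩ := hV u.2
  have hcu := hus.continuous
  have hcx := dX_cont hus
  have hcy := dY_cont hus
  have hA := Azero_cont t₀ b₀
  have hq := hneg u u.2 (fun h0 => hne (Subtype.ext h0))
  have hP := poinc2 hus huc (a := xa) (c := ta) n hh0 hk0 (fun i hi j hj =>
    congrFun hLu (⟨i, hi⟩, ⟨j, hj⟩))
  have l1 : xa ≤ xa + n * h := by rw [hnh]; linarith
  have l2 : ta ≤ ta + n * k := by rw [hnk]; linarith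
  rw [← intK (g := fun p => ‖(u : ℝ × ℝ → ℂ) p‖ ^ 2) (by fun_prop) l1 l2,
    ← intK (g := fun p => ‖dX (u : ℝ × ℝ → ℂ) p‖ ^ 2) (by fun_prop) l1 l2,
    ← intK (g := fun p => ‖dY (u : ℝ × ℝ → ℂ) p‖ ^ 2) (by fun_prop) l1 l2, ← hKe] at hP
  have hint : ∀ g : ℝ × ℝ → ℝ, Continuous g → IntegrableOn g (Krect x₀ t₀ a ε₀) := by
    intro g hg; rw [hKe]; exact intOnK hg _ _ _ _
  have low : ∫ p in Krect x₀ t₀ a ε₀, (E ^ 2 / 2 * ‖dX (u : ℝ × ℝ → ℂ) p‖ ^ 2 + ‖dY (u : ℝ × ℝ → ℂ) p‖ ^ 2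
      - M * ‖(u : ℝ × ℝ → ℂ) p‖ ^ 2) ≤ qK0 x₀ t₀ a ε₀ b₀ u := by
    refine setIntegral_mono_on (hint _ (by fun_prop)) (hint _ (by fun_prop)) hKm ?_
    intro p hp
    have hm := mag_lower (dX (u : ℝ × ℝ → ℂ) p) ((u : ℝ × ℝ → ℂ) p) (Azero t₀ b₀ p)
    have hEE : Real.exp (2 * t₀) = E ^ 2 := by rw [hE, ← Real.exp_nat_mul]; norm_num
    have hAE : E ^ 2 * Azero t₀ b₀ p ^ 2 ≤ M := by
      have : E ^ 2 * Azero t₀ b₀ p ^ 2 = (p.2 - t₀) ^ 2 * b₀ ^ 2 := by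
        unfold Azero; rw [Real.exp_neg, ← hE]; field_simp
      rw [this, hM]
      gcongr ?_ * _
      have hp2 := hp.2
      simp only [Set.mem_Ioo] at hp2
      rw [sq_le_sq, abs_of_pos (a := ε₀ / 2) (by positivity), abs_le]
      constructor <;> linarith [hp2.1, hp2.2]
    rw [hEE]
    have h3 := mul_le_mul_of_nonneg_left hm (sq_nonneg E)
    have h4 := mul_le_mul_of_nonneg_right hAE (sq_nonneg ‖(u : ℝ × ℝ → ℂ) p‖)
    nlinarith [sq_nonneg ‖(u : ℝ × ℝ → ℂ) p‖]
  rw [integral_sub (hint (fun p => E ^ 2 / 2 * ‖dX (u : ℝ × ℝ → ℂ) p‖ ^ 2 + ‖dY (u : ℝ × ℝ → ℂ) p‖ ^ 2) (by fun_prop))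
    (hint _ (by fun_prop)), integral_add (hint _ (by fun_prop)) (hint _ (by fun_prop)),
    integral_const_mul, integral_const_mul] at low
  have n1 : 0 ≤ ∫ p in Krect x₀ t₀ a ε₀, ‖dX (u : ℝ × ℝ → ℂ) p‖ ^ 2 := integral_nonneg fun _ => by positivity
  have n2 : 0 ≤ ∫ p in Krect x₀ t₀ a ε₀, ‖dY (u : ℝ × ℝ → ℂ) p‖ ^ 2 := integral_nonneg fun _ => by positivity
  have n3 : 0 ≤ ∫ p in Krect x₀ t₀ a ε₀, ‖(u : ℝ × ℝ → ℂ) p‖ ^ 2 := integral_nonneg fun _ => by positivity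
  set I1 := ∫ p in Krect x₀ t₀ a ε₀, ‖dX (u : ℝ × ℝ → ℂ) p‖ ^ 2
  set I2 := ∫ p in Krect x₀ t₀ a ε₀, ‖dY (u : ℝ × ℝ → ℂ) p‖ ^ 2
  set I3 := ∫ p in Krect x₀ t₀ a ε₀, ‖(u : ℝ × ℝ → ℂ) p‖ ^ 2
  have f1 := mul_le_mul_of_nonneg_left hP hML
  have f2 := mul_le_mul_of_nonneg_right b1 n1
  have f3 := mul_le_mul_of_nonneg_right b2 n2
  have f4 := mul_le_mul_of_nonneg_right (le_abs_self lam) n3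
  nlinarith

def Dop (t₀ b₀ : ℝ) (u : ℝ × ℝ → ℂ) (p : ℝ × ℝ) : ℂ :=
  -Complex.I * dX u p - (Azero t₀ b₀ p : ℂ) * u p

def Bint (t₀ b₀ lam : ℝ) (u v : ℝ × ℝ → ℂ) (p : ℝ × ℝ) : ℂ :=
  (Real.exp (2 * t₀) : ℂ) * (Dop t₀ b₀ u p * (starRingEnd ℂ) (Dop t₀ b₀ v p))
    + dY u p * (starRingEnd ℂ) (dY v p) + ((1 / 4 - lam : ℝ) : ℂ) * (u p * (starRingEnd ℂ) (v p))

def Bf (x₀ t₀ a ε₀ b₀ lam : ℝ) (u v : ℝ × ℝ → ℂ) : ℂ :=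
  ∫ p in Krect x₀ t₀ a ε₀, Bint t₀ b₀ lam u v p

def testSub (Ω : Set (ℝ × ℝ)) : Submodule ℂ (ℝ × ℝ → ℂ) where
  carrier := {w | IsTestOn Ω w}
  add_mem' := by
    rintro u v ⟨h1, h2, h3⟩ ⟨k1, k2, k3⟩
    exact ⟨h1.add k1, h2.add k2, (tsupport_add u v).trans (Set.union_subset h3 k3)⟩
  zero_mem' := by
    refine ⟨contDiff_const, HasCompactSupport.zero, ?_⟩
    simp [tsupport]
  smul_mem' := by
    rintro c u ⟨h1, h2, h3⟩
    refine ⟨h1.const_smul c, h2.smul_left (f := fun _ => c), ?_⟩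
    exact (closure_mono (Function.support_const_smul_subset c u)).trans h3

theorem Dop_cont {t₀ b₀ : ℝ} {u : ℝ × ℝ → ℂ} (hu : ContDiff ℝ (⊤ : ℕ∞) u) :
    Continuous (Dop t₀ b₀ u) := by
  have h1 := dX_cont hu
  have h2 := Azero_cont t₀ b₀
  have h3 := hu.continuous
  unfold Dop
  fun_prop

theorem Bint_cont {t₀ b₀ lam : ℝ} {u v : ℝ × ℝ → ℂ} (hu : ContDiff ℝ (⊤ : ℕ∞) u)
    (hv : ContDiff ℝ (⊤ : ℕ∞) v) : Continuous (Bint t₀ b₀ lam u v) := by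
  have h1 := Dop_cont (t₀ := t₀) (b₀ := b₀) hu
  have h2 := Dop_cont (t₀ := t₀) (b₀ := b₀) hv
  have h3 := dY_cont hu
  have h4 := dY_cont hv
  have h5 := hu.continuous
  have h6 := hv.continuous
  have hs : Continuous (starRingEnd ℂ) := Complex.continuous_conj
  unfold Bint
  exact ((continuous_const.mul (h1.mul (hs.comp h2))).add (h3.mul (hs.comp h4))).add
    (continuous_const.mul (h5.mul (hs.comp h6)))

theorem dX_add' {u v : ℝ × ℝ → ℂ} (hu : ContDiff ℝ (⊤ : ℕ∞) u)
    (hv : ContDiff ℝ (⊤ : ℕ∞) v) (p : ℝ × ℝ) : dX (u + v) p = dX u p + dX v p := by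
  unfold dX
  rw [fderiv_add ((hu.differentiable (by norm_num)) p) ((hv.differentiable (by norm_num)) p)]
  rfl

theorem dY_add' {u v : ℝ × ℝ → ℂ} (hu : ContDiff ℝ (⊤ : ℕ∞) u)
    (hv : ContDiff ℝ (⊤ : ℕ∞) v) (p : ℝ × ℝ) : dY (u + v) p = dY u p + dY v p := by
  unfold dY
  rw [fderiv_add ((hu.differentiable (by norm_num)) p) ((hv.differentiable (by norm_num)) p)]
  rfl

theorem dX_smul' {u : ℝ × ℝ → ℂ} (c : ℂ) (hu : ContDiff ℝ (⊤ : ℕ∞) u)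
    (p : ℝ × ℝ) : dX (c • u) p = c * dX u p := by
  unfold dX
  rw [fderiv_const_smul ((hu.differentiable (by norm_num)) p)]
  rfl

theorem dY_smul' {u : ℝ × ℝ → ℂ} (c : ℂ) (hu : ContDiff ℝ (⊤ : ℕ∞) u)
    (p : ℝ × ℝ) : dY (c • u) p = c * dY u p := by
  unfold dY
  rw [fderiv_const_smul ((hu.differentiable (by norm_num)) p)]
  rfl

theorem Bf_re {x₀ t₀ a ε₀ b₀ lam : ℝ} {u : ℝ × ℝ → ℂ} (hu : ContDiff ℝ (⊤ : ℕ∞) u) :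
    (Bf x₀ t₀ a ε₀ b₀ lam u u).re =
      qK0 x₀ t₀ a ε₀ b₀ u - lam * ∫ p in Krect x₀ t₀ a ε₀, ‖u p‖ ^ 2 := by
  have hcu := hu.continuous
  have hcx := dX_cont hu
  have hcy := dY_cont hu
  have hA := Azero_cont t₀ b₀
  have hi : IntegrableOn (Bint t₀ b₀ lam u u) (Krect x₀ t₀ a ε₀) :=
    intOnK (Bint_cont hu hu) _ _ _ _
  have e : (Bf x₀ t₀ a ε₀ b₀ lam u u).re = ∫ p in Krect x₀ t₀ a ε₀, (Bint t₀ b₀ lam u u p).re := by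
    have := integral_re (𝕜 := ℂ) hi
    simpa [Bf] using this.symm
  rw [e, ← integral_const_mul, qK0, ← integral_sub]
  · congr 1
    ext p
    have hz : ∀ (r : ℝ) (z : ℂ), ((r : ℂ) * (z * (starRingEnd ℂ) z)).re = r * ‖z‖ ^ 2 := by
      intro r z; rw [Complex.mul_conj, Complex.normSq_eq_norm_sq, ← Complex.ofReal_mul, Complex.ofReal_re]
    have hz1 : ∀ (z : ℂ), ((z * (starRingEnd ℂ) z)).re = ‖z‖ ^ 2 := by
      intro z; rw [Complex.mul_conj, Complex.normSq_eq_norm_sq, Complex.ofReal_re]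
    rw [Bint, Complex.add_re, Complex.add_re, hz, hz, hz1, Dop]
    ring
  · exact intOnK (by fun_prop) _ _ _ _
  · exact intOnK (by fun_prop) _ _ _ _

theorem count_main {x₀ t₀ a ε₀ b₀ lam : ℝ} (ha : 0 < a) (hε : 0 < ε₀) {ι J : Type}
    [Fintype ι] [Fintype J] (T : J → (ι → ℂ) →ₗ[ℂ] (ℝ × ℝ → ℂ))
    (hT : ∀ j v, IsTestOn (Krect x₀ t₀ a ε₀) (T j v))
    (hneg : ∀ v, v ≠ 0 → ∑ j, (qK0 x₀ t₀ a ε₀ b₀ (T j v) -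
      lam * ∫ p in Krect x₀ t₀ a ε₀, ‖T j v p‖ ^ 2) < 0) :
    Fintype.card ι ≤ Fintype.card J * NK0 x₀ t₀ a ε₀ b₀ lam := by
  unfold NK0 NN
  refine neg_space_pigeonhole (testSub (Krect x₀ t₀ a ε₀)) (Bf x₀ t₀ a ε₀ b₀ lam) ?_ ?_ ?_ _ ?_
    (bdd_count ha hε) T hT ?_
  · rintro u ⟨hu, -, -⟩ v ⟨hv, -, -⟩ w ⟨hw, -, -⟩
    unfold Bf Krect
    rw [← integral_add (intOnK (Bint_cont hu hw) _ _ _ _) (intOnK (Bint_cont hv hw) _ _ _ _)]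
    congr 1; ext p
    simp only [Bint, Dop, dX_add' hu hv, dY_add' hu hv, Pi.add_apply]
    ring
  · rintro c u ⟨hu, -, -⟩ w ⟨hw, -, -⟩
    unfold Bf Krect
    rw [← integral_const_mul]
    congr 1; ext p
    simp only [Bint, Dop, dX_smul' c hu, dY_smul' c hu, Pi.smul_apply, smul_eq_mul]
    ring
  · rintro u ⟨hu, -, -⟩ v ⟨hv, -, -⟩
    unfold Bf Krect
    rw [← integral_conj]
    congr 1; ext p
    simp only [Bint, map_add, map_mul, Complex.conj_conj, Complex.conj_ofReal]
    ring
  · ext n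
    constructor
    · rintro ⟨V, hV, hn, h⟩
      refine ⟨V, hV, hn, fun u hu hu0 => ?_⟩
      rw [Bf_re (hV hu).1]
      linarith [h u hu hu0]
    · rintro ⟨V, hV, hn, h⟩
      refine ⟨V, hV, hn, fun u hu hu0 => ?_⟩
      have := h u hu hu0
      rw [Bf_re (hV hu).1] at this
      linarith
  · intro v hv
    have := hneg v hv
    simpa only [Bf_re (hT _ v).1] using this

def Sx {R : ℕ} (ξ : Fin R → ℝ) (z : Fin R → ℂ) (x : ℝ) : ℂ :=
  ∑ r, z r * Complex.exp (Complex.I * (ξ r : ℂ) * (x : ℂ))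

theorem Sx_cont {R : ℕ} (ξ : Fin R → ℝ) (z : Fin R → ℂ) : Continuous (Sx ξ z) := by
  unfold Sx; fun_prop

theorem Sx_per {R : ℕ} {ξ : Fin R → ℝ} {l s : ℝ} (hl : 0 < l)
    (hs : s = 1 ∨ s = -1) (hξ : ∀ r, ξ r = s * (2 * π * (r : ℕ) / l)) (z : Fin R → ℂ) (x : ℝ) :
    Sx ξ z (x + l) = Sx ξ z x := by
  unfold Sx
  refine Finset.sum_congr rfl fun r _ => ?_
  congr 1
  have hl' : (l : ℂ) ≠ 0 := by exact_mod_cast hl.ne'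
  rw [Complex.exp_eq_exp_iff_exists_int]
  rcases hs with rfl | rfl
  · refine ⟨(r : ℕ), ?_⟩
    rw [hξ]; push_cast; field_simp
  · refine ⟨-(r : ℕ), ?_⟩
    rw [hξ]; push_cast; field_simp; ring

theorem Sx_parseval {R : ℕ} {ξ : Fin R → ℝ} {l s : ℝ} (hl : 0 < l)
    (hs : s = 1 ∨ s = -1) (hξ : ∀ r, ξ r = s * (2 * π * (r : ℕ) / l)) (z : Fin R → ℂ) :
    ∫ x in (0:ℝ)..l, ‖Sx ξ z x‖ ^ 2 = l * ∑ r, ‖z r‖ ^ 2 := by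
  have hl' : (l : ℂ) ≠ 0 := by exact_mod_cast hl.ne'
  have hpi : (π : ℂ) ≠ 0 := by exact_mod_cast Real.pi_ne_zero
  have e : ∀ x : ℝ, ((‖Sx ξ z x‖ ^ 2 : ℝ) : ℂ) = ∑ r, ∑ q, (z r * (starRingEnd ℂ) (z q)) *
      Complex.exp ((Complex.I * ((ξ r - ξ q : ℝ) : ℂ)) * (x : ℂ)) := by
    intro x
    rw [← Complex.normSq_eq_norm_sq, ← Complex.mul_conj, Sx, map_sum, Finset.sum_mul_sum]
    refine Finset.sum_congr rfl fun r _ => Finset.sum_congr rfl fun q _ => ?_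
    rw [map_mul, ← Complex.exp_conj]
    simp only [map_mul, Complex.conj_I, Complex.conj_ofReal]
    rw [mul_mul_mul_comm, ← Complex.exp_add]
    congr 2
    push_cast; ring
  have o : ∀ r q : Fin R, ∫ x in (0:ℝ)..l, Complex.exp ((Complex.I * ((ξ r - ξ q : ℝ) : ℂ)) * (x : ℂ))
      = if r = q then (l : ℂ) else 0 := by
    intro r q
    split_ifs with h
    · subst h; simp
    · have hne : (Complex.I * ((ξ r - ξ q : ℝ) : ℂ)) ≠ 0 := by
        refine mul_ne_zero Complex.I_ne_zero ?_
        rw [Complex.ofReal_ne_zero, hξ, hξ, ← mul_sub]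
        refine mul_ne_zero (by rcases hs with rfl | rfl <;> norm_num) ?_
        rw [← sub_div, ← mul_sub]
        refine div_ne_zero (mul_ne_zero (by positivity) ?_) hl.ne'
        rw [sub_ne_zero]
        intro hh
        exact h (Fin.ext (by exact_mod_cast hh))
      rw [integral_exp_mul_complex hne]
      have : Complex.exp (Complex.I * ((ξ r - ξ q : ℝ) : ℂ) * (l : ℂ)) = 1 := by
        rw [Complex.exp_eq_one_iff]
        rcases hs with rfl | rfl
        · refine ⟨(r : ℕ) - (q : ℕ), ?_⟩
          rw [hξ, hξ]; push_cast; field_simp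
        · refine ⟨(q : ℕ) - (r : ℕ), ?_⟩
          rw [hξ, hξ]; push_cast; field_simp; ring
      rw [this]; simp
  have key : ((∫ x in (0:ℝ)..l, ‖Sx ξ z x‖ ^ 2 : ℝ) : ℂ) = ((l * ∑ r, ‖z r‖ ^ 2 : ℝ) : ℂ) := by
    rw [← intervalIntegral.integral_ofReal]
    simp only [e]
    rw [intervalIntegral.integral_finsetSum (fun r _ => Continuous.intervalIntegrable (by fun_prop) _ _)]
    have o2 : ∀ r : Fin R, ∫ x in (0:ℝ)..l, ∑ q, (z r * (starRingEnd ℂ) (z q)) *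
        Complex.exp ((Complex.I * ((ξ r - ξ q : ℝ) : ℂ)) * (x : ℂ))
        = ∑ q, (z r * (starRingEnd ℂ) (z q)) * if r = q then (l : ℂ) else 0 := by
      intro r
      rw [intervalIntegral.integral_finsetSum (fun q _ => Continuous.intervalIntegrable (by fun_prop) _ _)]
      simp only [intervalIntegral.integral_const_mul, o]
    simp only [o2]
    simp only [mul_ite, mul_zero, Finset.sum_ite_eq, Finset.mem_univ, if_true]
    push_cast
    rw [Finset.mul_sum]
    refine Finset.sum_congr rfl fun r _ => ?_
    rw [Complex.mul_conj, Complex.normSq_eq_norm_sq]; push_cast; ring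
  exact_mod_cast key

theorem etac_deriv_cont (l δ : ℝ) : Continuous (deriv (etac l δ)) :=
  (etac_contDiff l δ).continuous_deriv (by norm_num)

theorem etac_deriv_left {l δ x : ℝ} (hδ : 0 < δ) (h : x ≤ 0) : deriv (etac l δ) x = 0 :=
  deriv_zero_Iic (etac_contDiff l δ) (fun _ hy => etac_zero_left hδ hy) h

theorem etac_deriv_right {l δ x : ℝ} (hδ : 0 < δ) (h : l + δ ≤ x) : deriv (etac l δ) x = 0 :=
  deriv_zero_Ici (etac_contDiff l δ) (fun _ hy => etac_zero_right hδ hy) h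

theorem pcut_deriv_cont (δ : ℝ) : Continuous (deriv (pcut δ)) :=
  (pcut_contDiff δ).continuous_deriv (by norm_num)

theorem pcut_deriv_left {δ x : ℝ} (hδ : 0 < δ) (h : x ≤ 0) : deriv (pcut δ) x = 0 :=
  deriv_zero_Iic (pcut_contDiff δ) (fun _ hy => pcut_zero hδ hy) h

theorem pcut_deriv_right {δ x : ℝ} (hδ : 0 < δ) (h : δ ≤ x) : deriv (pcut δ) x = 0 :=
  deriv_zero_Ici (pcut_contDiff δ) (fun _ hy => pcut_one hδ hy) h

theorem cpt_of_out {E : Type*} [Zero E] {f : ℝ → E} {a b : ℝ} (h1 : ∀ x ≤ a, f x = 0)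
    (h2 : ∀ x, b ≤ x → f x = 0) : HasCompactSupport f :=
  HasCompactSupport.intro (isCompact_Icc (a := a) (b := b)) (fun x hx => by
    rw [Set.mem_Icc, not_and_or, not_le, not_le] at hx
    rcases hx with h | h
    · exact h1 x h.le
    · exact h2 x h.le)

theorem etac_cpt {l δ : ℝ} (hδ : 0 < δ) : HasCompactSupport (etac l δ) :=
  cpt_of_out (fun _ h => etac_zero_left hδ h) (fun _ h => etac_zero_right hδ h)

theorem etac_deriv_cpt {l δ : ℝ} (hδ : 0 < δ) : HasCompactSupport (deriv (etac l δ)) :=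
  cpt_of_out (fun _ h => etac_deriv_left hδ h) (fun _ h => etac_deriv_right hδ h)

theorem expand_sq (E X' X : ℝ) (A B : ℂ) :
    ‖-Complex.I * ((E * X' : ℝ) : ℂ) * A + (X : ℂ) * B‖ ^ 2
      = E ^ 2 * (X' ^ 2 * ‖A‖ ^ 2) + X ^ 2 * ‖B‖ ^ 2
        + E * ((2 * (X * X')) * (A.im * B.re - A.re * B.im)) := by
  rw [← Complex.normSq_eq_norm_sq, ← Complex.normSq_eq_norm_sq, ← Complex.normSq_eq_norm_sq]
  simp only [Complex.normSq_apply, Complex.add_re, Complex.add_im, Complex.mul_re, Complex.mul_im,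
    Complex.neg_re, Complex.neg_im, Complex.I_re, Complex.I_im, Complex.ofReal_re, Complex.ofReal_im]
  ring

theorem int_add5 {α : Type*} [MeasurableSpace α] {μ : Measure α} {f1 f2 f3 f4 f5 : α → ℝ}
    (h1 : Integrable f1 μ) (h2 : Integrable f2 μ) (h3 : Integrable f3 μ) (h4 : Integrable f4 μ)
    (h5 : Integrable f5 μ) :
    ∫ x, (f1 x + (f2 x + (f3 x + (f4 x + f5 x)))) ∂μ
      = (∫ x, f1 x ∂μ) + ((∫ x, f2 x ∂μ) + ((∫ x, f3 x ∂μ) + ((∫ x, f4 x ∂μ) + ∫ x, f5 x ∂μ))) := by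
  have a1 : Integrable (fun x => f4 x + f5 x) μ := h4.add h5
  have a2 : Integrable (fun x => f3 x + (f4 x + f5 x)) μ := h3.add a1
  have a3 : Integrable (fun x => f2 x + (f3 x + (f4 x + f5 x))) μ := h2.add a2
  rw [integral_add h1 a3, integral_add h2 a2, integral_add h3 a1, integral_add h4 h5]

theorem x_lemma {C1 : ℝ} (hC1 : ∀ l δ x : ℝ, 0 < δ → |deriv (etac l δ) x| ≤ C1 / δ)
    {R : ℕ} {ξ : Fin R → ℝ} {l δ s E θ : ℝ} (hδ : 0 < δ) (hδl : δ ≤ l)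
    (hs : s = 1 ∨ s = -1) (hξ : ∀ r, ξ r = s * (2 * π * (r : ℕ) / l)) (z y q : Fin R → ℂ) :
    ∫ x, (‖-Complex.I * ((E * deriv (etac l δ) x : ℝ) : ℂ) * Sx ξ z x + (etac l δ x : ℂ) * Sx ξ y x‖ ^ 2
      + ‖(etac l δ x : ℂ) * Sx ξ q x‖ ^ 2 + θ * ‖(etac l δ x : ℂ) * Sx ξ z x‖ ^ 2)
    ≤ l * ∑ r, ((2 * E ^ 2 * (C1 / δ) ^ 2 + θ) * ‖z r‖ ^ 2 + ‖y r‖ ^ 2 + ‖q r‖ ^ 2) := by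
  have hl : 0 < l := hδ.trans_le hδl
  have cz := Sx_cont ξ z
  have cy := Sx_cont ξ y
  have cq := Sx_cont ξ q
  have ce : Continuous (etac l δ) := (etac_contDiff l δ).continuous
  have cd := etac_deriv_cont l δ
  have cp : Continuous (pcut δ) := (pcut_contDiff δ).continuous
  have cpd := pcut_deriv_cont δ
  have i1 : ∀ G : ℝ → ℝ, Continuous G → Integrable fun x => etac l δ x ^ 2 * G x := fun G hG =>
    Continuous.integrable_of_hasCompactSupport (by fun_prop) (by
      refine HasCompactSupport.mul_right ?_
      exact (etac_cpt hδ).comp_left (g := fun y => y ^ 2) (by simp))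
  have i2 : ∀ G : ℝ → ℝ, Continuous G → Integrable fun x => deriv (etac l δ) x ^ 2 * G x := fun G hG =>
    Continuous.integrable_of_hasCompactSupport (by fun_prop) (by
      refine HasCompactSupport.mul_right ?_
      exact (etac_deriv_cpt hδ).comp_left (g := fun y => y ^ 2) (by simp))
  have i3 : ∀ G : ℝ → ℝ, Continuous G → Integrable fun x => (2 * (etac l δ x * deriv (etac l δ) x)) * G x :=
    fun G hG =>
    Continuous.integrable_of_hasCompactSupport (by fun_prop) (by
      refine HasCompactSupport.mul_right ?_
      exact (HasCompactSupport.mul_right (etac_cpt hδ)).mul_left (f := fun _ => (2:ℝ)))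
  have v1 : ∀ w : Fin R → ℂ, ∫ x, etac l δ x ^ 2 * ‖Sx ξ w x‖ ^ 2 = l * ∑ r, ‖w r‖ ^ 2 := by
    intro w
    have cw := Sx_cont ξ w
    simp only [etac_sq hδ hδl]
    rw [per_lemma (P := pcut δ) (G := fun x => ‖Sx ξ w x‖ ^ 2) (c := 1) hl cp (by fun_prop)
      (fun x => by rw [Sx_per hl hs hξ]) (fun x hx => pcut_zero hδ hx)
      (fun x hx => pcut_one hδ (hδl.trans hx)), one_mul, Sx_parseval hl hs hξ]
  have v2 : ∫ x, deriv (etac l δ) x ^ 2 * ‖Sx ξ z x‖ ^ 2 ≤ 2 * (C1 / δ) ^ 2 * (l * ∑ r, ‖z r‖ ^ 2) := by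
    rw [← Sx_parseval hl hs hξ]
    refine per_bound (R := fun x => deriv (etac l δ) x ^ 2) (G := fun x => ‖Sx ξ z x‖ ^ 2) hl
      (by fun_prop) (by fun_prop) (fun x => by rw [Sx_per hl hs hξ]) (fun x => by positivity)
      (fun x => ?_) (fun x hx => by simp only [etac_deriv_left hδ hx]; norm_num)
      (fun x hx => by simp only [etac_deriv_right hδ (by linarith : l + δ ≤ x)]; norm_num)
    rw [← sq_abs]
    gcongr
    exact hC1 l δ x hδ
  have v3 : ∫ x, (2 * (etac l δ x * deriv (etac l δ) x)) *
      ((Sx ξ z x).im * (Sx ξ y x).re - (Sx ξ z x).re * (Sx ξ y x).im) = 0 := by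
    simp only [etac_mul_deriv hδ hδl]
    rw [per_lemma (P := deriv (pcut δ)) (G := fun x => (Sx ξ z x).im * (Sx ξ y x).re - (Sx ξ z x).re * (Sx ξ y x).im)
      (c := 0) hl cpd (by fun_prop) (fun x => by rw [Sx_per hl hs hξ, Sx_per hl hs hξ])
      (fun x hx => pcut_deriv_left hδ hx) (fun x hx => pcut_deriv_right hδ (hδl.trans hx)), zero_mul]
  have e : ∀ x, (‖-Complex.I * ((E * deriv (etac l δ) x : ℝ) : ℂ) * Sx ξ z x + (etac l δ x : ℂ) * Sx ξ y x‖ ^ 2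
      + ‖(etac l δ x : ℂ) * Sx ξ q x‖ ^ 2 + θ * ‖(etac l δ x : ℂ) * Sx ξ z x‖ ^ 2)
      = E ^ 2 * (deriv (etac l δ) x ^ 2 * ‖Sx ξ z x‖ ^ 2) + (etac l δ x ^ 2 * ‖Sx ξ y x‖ ^ 2
        + (E * ((2 * (etac l δ x * deriv (etac l δ) x)) *
      ((Sx ξ z x).im * (Sx ξ y x).re - (Sx ξ z x).re * (Sx ξ y x).im))
        + (etac l δ x ^ 2 * ‖Sx ξ q x‖ ^ 2 + θ * (etac l δ x ^ 2 * ‖Sx ξ z x‖ ^ 2)))) := by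
    intro x
    rw [expand_sq]
    simp only [norm_mul, Complex.norm_real, mul_pow, Real.norm_eq_abs, sq_abs]
    ring
  simp only [e]
  have j1 := (i2 (fun x => ‖Sx ξ z x‖ ^ 2) (by fun_prop)).const_mul (E ^ 2)
  have j2 := i1 (fun x => ‖Sx ξ y x‖ ^ 2) (by fun_prop)
  have j3 := (i3 (fun x => (Sx ξ z x).im * (Sx ξ y x).re - (Sx ξ z x).re * (Sx ξ y x).im) (by fun_prop)).const_mul E
  have j4 := i1 (fun x => ‖Sx ξ q x‖ ^ 2) (by fun_prop)
  have j5 := (i1 (fun x => ‖Sx ξ z x‖ ^ 2) (by fun_prop)).const_mul θ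
  rw [int_add5 j1 j2 j3 j4 j5, integral_const_mul, integral_const_mul,
    integral_const_mul, v1, v1, v1, v3]
  have h2 := mul_le_mul_of_nonneg_left v2 (sq_nonneg E)
  refine (add_le_add_left h2 _).trans (le_of_eq ?_)
  simp only [Finset.sum_add_distrib, ← Finset.mul_sum]
  ring

theorem expand_sq2 (X' X : ℝ) (A B : ℂ) :
    ‖(X' : ℂ) * A + (X : ℂ) * B‖ ^ 2
      = X' ^ 2 * ‖A‖ ^ 2 + X ^ 2 * ‖B‖ ^ 2 + (2 * (X * X')) * (A.re * B.re + A.im * B.im) := by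
  rw [← Complex.normSq_eq_norm_sq, ← Complex.normSq_eq_norm_sq, ← Complex.normSq_eq_norm_sq]
  simp only [Complex.normSq_apply, Complex.add_re, Complex.add_im, Complex.mul_re, Complex.mul_im,
    Complex.ofReal_re, Complex.ofReal_im]
  ring

theorem t_lemma {C1 : ℝ} (hC1 : ∀ l δ x : ℝ, 0 < δ → |deriv (etac l δ) x| ≤ C1 / δ)
    {f f' : ℝ → ℂ} {V : ℝ → ℝ} {l δ : ℝ} (n : ℕ) (hδ : 0 < δ) (hδl : δ ≤ l)
    (hf : Continuous f) (hf' : Continuous f') (hV : Continuous V)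
    (hs : ∀ s, f s ≠ 0 → δ ≤ s ∧ s ≤ n * l) (hs' : ∀ s, f' s ≠ 0 → δ ≤ s ∧ s ≤ n * l) :
    ∑ j : Fin n, ∫ t, (V (t + (j : ℕ) * l) * ‖(etac l δ t : ℂ) * f (t + (j : ℕ) * l)‖ ^ 2
      + ‖((deriv (etac l δ) t : ℝ) : ℂ) * f (t + (j : ℕ) * l)
          + (etac l δ t : ℂ) * f' (t + (j : ℕ) * l)‖ ^ 2)
    ≤ ∫ s, (V s * ‖f s‖ ^ 2 + ‖f' s‖ ^ 2 + 2 * (C1 / δ) ^ 2 * ‖f s‖ ^ 2) := by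
  have hl : 0 < l := hδ.trans_le hδl
  have ce : Continuous (etac l δ) := (etac_contDiff l δ).continuous
  have cd := etac_deriv_cont l δ
  have cp : Continuous (pcut δ) := (pcut_contDiff δ).continuous
  have cpd := pcut_deriv_cont δ
  have i1 : ∀ G : ℝ → ℝ, Continuous G → Integrable fun x => etac l δ x ^ 2 * G x := fun G hG =>
    Continuous.integrable_of_hasCompactSupport (by fun_prop) (by
      refine HasCompactSupport.mul_right ?_
      exact (etac_cpt hδ).comp_left (g := fun y => y ^ 2) (by simp))
  have i2 : ∀ G : ℝ → ℝ, Continuous G → Integrable fun x => deriv (etac l δ) x ^ 2 * G x := fun G hG =>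
    Continuous.integrable_of_hasCompactSupport (by fun_prop) (by
      refine HasCompactSupport.mul_right ?_
      exact (etac_deriv_cpt hδ).comp_left (g := fun y => y ^ 2) (by simp))
  have i3 : ∀ G : ℝ → ℝ, Continuous G → Integrable fun x => (2 * (etac l δ x * deriv (etac l δ) x)) * G x :=
    fun G hG =>
    Continuous.integrable_of_hasCompactSupport (by fun_prop) (by
      refine HasCompactSupport.mul_right ?_
      exact (HasCompactSupport.mul_right (etac_cpt hδ)).mul_left (f := fun _ => (2:ℝ)))
  have cf : HasCompactSupport f := HasCompactSupport.intro (isCompact_Icc (a := δ) (b := n * l))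
    (fun x hx => by by_contra h; exact hx (hs x h))
  have cf' : HasCompactSupport f' := HasCompactSupport.intro (isCompact_Icc (a := δ) (b := n * l))
    (fun x hx => by by_contra h; exact hx (hs' x h))
  have cf2 : HasCompactSupport (fun s => ‖f s‖ ^ 2) := cf.comp_left (g := fun z => ‖z‖ ^ 2) (by simp)
  have cf2' : HasCompactSupport (fun s => ‖f' s‖ ^ 2) := cf'.comp_left (g := fun z => ‖z‖ ^ 2) (by simp)
  have v1 : ∀ G : ℝ → ℝ, Continuous G → (∀ s, G s ≠ 0 → δ ≤ s ∧ s ≤ n * l) →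
      ∑ j : Fin n, ∫ t, etac l δ t ^ 2 * G (t + (j : ℕ) * l) = ∫ s, G s := by
    intro G hG hGs
    simp only [etac_sq hδ hδl]
    rw [cpt_lemma (P := pcut δ) (c := 1) n cp hG hGs (fun x hx => pcut_zero hδ hx)
      (fun x hx => pcut_one hδ hx), one_mul]
  have v3 : ∀ G : ℝ → ℝ, Continuous G → (∀ s, G s ≠ 0 → δ ≤ s ∧ s ≤ n * l) →
      ∑ j : Fin n, ∫ t, (2 * (etac l δ t * deriv (etac l δ) t)) * G (t + (j : ℕ) * l) = 0 := by
    intro G hG hGs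
    simp only [etac_mul_deriv hδ hδl]
    rw [cpt_lemma (P := deriv (pcut δ)) (c := 0) n cpd hG hGs (fun x hx => pcut_deriv_left hδ hx)
      (fun x hx => pcut_deriv_right hδ hx), zero_mul]
  have v2 : ∑ j : Fin n, ∫ t, deriv (etac l δ) t ^ 2 * ‖f (t + (j : ℕ) * l)‖ ^ 2
      ≤ 2 * (C1 / δ) ^ 2 * ∫ s, ‖f s‖ ^ 2 := by
    refine cpt_bound (R := fun t => deriv (etac l δ) t ^ 2) (F := fun s => ‖f s‖ ^ 2) n hl
      (by positivity) (by fun_prop) (by fun_prop) cf2 (fun x => by positivity) (fun x => ?_)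
      (fun x hx => by simp only [etac_deriv_left hδ hx]; norm_num)
      (fun x hx => by simp only [etac_deriv_right hδ (by linarith : l + δ ≤ x)]; norm_num)
    rw [← sq_abs]
    gcongr
    exact hC1 l δ x hδ
  have e : ∀ (j : Fin n) t, (V (t + (j : ℕ) * l) * ‖(etac l δ t : ℂ) * f (t + (j : ℕ) * l)‖ ^ 2
      + ‖((deriv (etac l δ) t : ℝ) : ℂ) * f (t + (j : ℕ) * l)
          + (etac l δ t : ℂ) * f' (t + (j : ℕ) * l)‖ ^ 2)
      = etac l δ t ^ 2 * (V (t + (j : ℕ) * l) * ‖f (t + (j : ℕ) * l)‖ ^ 2)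
        + (deriv (etac l δ) t ^ 2 * ‖f (t + (j : ℕ) * l)‖ ^ 2
        + (etac l δ t ^ 2 * ‖f' (t + (j : ℕ) * l)‖ ^ 2
        + ((2 * (etac l δ t * deriv (etac l δ) t)) *
          ((f (t + (j : ℕ) * l)).re * (f' (t + (j : ℕ) * l)).re
            + (f (t + (j : ℕ) * l)).im * (f' (t + (j : ℕ) * l)).im) + 0))) := by
    intro j t
    rw [expand_sq2]
    simp only [norm_mul, Complex.norm_real, mul_pow, Real.norm_eq_abs, sq_abs]
    ring
  simp only [e]
  have step : ∀ j : Fin n, _ := fun j => int_add5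
    (i1 (fun t => V (t + (j : ℕ) * l) * ‖f (t + (j : ℕ) * l)‖ ^ 2) (by fun_prop))
    (i2 (fun t => ‖f (t + (j : ℕ) * l)‖ ^ 2) (by fun_prop))
    (i1 (fun t => ‖f' (t + (j : ℕ) * l)‖ ^ 2) (by fun_prop))
    (i3 (fun t => (f (t + (j : ℕ) * l)).re * (f' (t + (j : ℕ) * l)).re
            + (f (t + (j : ℕ) * l)).im * (f' (t + (j : ℕ) * l)).im) (by fun_prop))
    (integrable_zero ℝ ℝ volume)
  refine le_of_eq_of_le (Finset.sum_congr rfl fun j _ => step j) ?_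
  simp only [Finset.sum_add_distrib]
  have w1 := v1 (fun s => V s * ‖f s‖ ^ 2) (by fun_prop) (fun s h => hs s (fun h0 => h (by simp [h0])))
  have w2 := v1 (fun s => ‖f' s‖ ^ 2) (by fun_prop) (fun s h => hs' s (fun h0 => h (by simp [h0])))
  have w3 := v3 (fun s => (f s).re * (f' s).re + (f s).im * (f' s).im) (by fun_prop)
    (fun s h => hs s (fun h0 => h (by simp [h0])))
  rw [w1, w2, w3]
  have k1 : Integrable (fun s => V s * ‖f s‖ ^ 2) := Continuous.integrable_of_hasCompactSupport (by fun_prop) (cf2.mul_left)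
  have k2 : Integrable (fun s => ‖f' s‖ ^ 2) := Continuous.integrable_of_hasCompactSupport (by fun_prop) cf2'
  have k3 : Integrable (fun s => 2 * (C1 / δ) ^ 2 * ‖f s‖ ^ 2) :=
    (Continuous.integrable_of_hasCompactSupport (by fun_prop) cf2).const_mul _
  have k12 : Integrable (fun s => V s * ‖f s‖ ^ 2 + ‖f' s‖ ^ 2) := k1.add k2
  rw [integral_add k12 k3, integral_add k1 k2, integral_const_mul]
  simp only [integral_zero, Finset.sum_const_zero, add_zero, Pi.zero_apply]
  linarith

theorem Sx_smul {R : ℕ} (ξ : Fin R → ℝ) (c : ℂ) (z : Fin R → ℂ) (x : ℝ) :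
    Sx ξ (fun r => c * z r) x = c * Sx ξ z x := by
  simp only [Sx, Finset.mul_sum, mul_assoc]

def Tf {R : ℕ} (xl tl l1 δ1 l2 δ2 κ sh : ℝ) (ξ : Fin R → ℝ) (f : Fin R → ℝ → ℂ) (p : ℝ × ℝ) : ℂ :=
  ((etac l1 δ1 (p.1 - xl) : ℝ) : ℂ) * ((etac l2 δ2 (p.2 - tl) : ℝ) : ℂ) *
    Complex.exp (Complex.I * (κ : ℂ) * ((p.1 - xl : ℝ) : ℂ)) *
    Sx ξ (fun r => f r (p.2 - tl + sh)) (p.1 - xl)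

theorem ofReal_cd : ContDiff ℝ (⊤ : ℕ∞) (fun x : ℝ => (x : ℂ)) := Complex.ofRealCLM.contDiff

theorem Tf_contDiff {R : ℕ} (xl tl l1 δ1 l2 δ2 κ sh : ℝ) (ξ : Fin R → ℝ) {f : Fin R → ℝ → ℂ}
    (hf : ∀ r, ContDiff ℝ (⊤ : ℕ∞) (f r)) :
    ContDiff ℝ (⊤ : ℕ∞) (Tf xl tl l1 δ1 l2 δ2 κ sh ξ f) := by
  unfold Tf Sx
  have h1 : ContDiff ℝ (⊤ : ℕ∞) (fun p : ℝ × ℝ => p.1 - xl) := contDiff_fst.sub contDiff_const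
  have h2 : ContDiff ℝ (⊤ : ℕ∞) (fun p : ℝ × ℝ => p.2 - tl) := contDiff_snd.sub contDiff_const
  have h3 : ContDiff ℝ (⊤ : ℕ∞) (fun p : ℝ × ℝ => p.2 - tl + sh) := h2.add contDiff_const
  refine ((((ofReal_cd.comp ((etac_contDiff l1 δ1).comp h1))).mul
    (ofReal_cd.comp ((etac_contDiff l2 δ2).comp h2))).mul ?_).mul ?_
  · exact (contDiff_const.mul (ofReal_cd.comp h1)).cexp
  · refine ContDiff.sum fun r _ => ?_
    exact ((hf r).comp h3).mul (contDiff_const.mul (ofReal_cd.comp h1)).cexp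

theorem etac_hd (l δ xl x : ℝ) : HasDerivAt (fun x : ℝ => ((etac l δ (x - xl) : ℝ) : ℂ))
    ((deriv (etac l δ) (x - xl) : ℝ) : ℂ) x := by
  have h := (((etac_contDiff l δ).differentiable (by norm_num)) (x - xl)).hasDerivAt
  exact (h.comp_sub_const x xl).ofReal_comp

theorem exp_hd (k xl x : ℝ) : HasDerivAt (fun x : ℝ => Complex.exp (Complex.I * (k : ℂ) * ((x - xl : ℝ) : ℂ)))
    (Complex.exp (Complex.I * (k : ℂ) * ((x - xl : ℝ) : ℂ)) * (Complex.I * (k : ℂ))) x := by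
  have h : HasDerivAt (fun x : ℝ => ((x - xl : ℝ) : ℂ)) ((1 : ℝ) : ℂ) x :=
    ((hasDerivAt_id x).sub_const xl).ofReal_comp
  have := (h.const_mul (Complex.I * (k : ℂ))).cexp
  simpa using this

theorem Tf_dX {R : ℕ} (xl tl l1 δ1 l2 δ2 κ sh : ℝ) (ξ : Fin R → ℝ) {f : Fin R → ℝ → ℂ}
    (hf : ∀ r, ContDiff ℝ (⊤ : ℕ∞) (f r)) (x t : ℝ) :
    dX (Tf xl tl l1 δ1 l2 δ2 κ sh ξ f) (x, t) =
      Complex.exp (Complex.I * (κ : ℂ) * ((x - xl : ℝ) : ℂ)) * ((etac l2 δ2 (t - tl) : ℝ) : ℂ) *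
      (((deriv (etac l1 δ1) (x - xl) : ℝ) : ℂ) * Sx ξ (fun r => f r (t - tl + sh)) (x - xl)
      + ((etac l1 δ1 (x - xl) : ℝ) : ℂ) * Sx ξ (fun r => Complex.I * ((κ + ξ r : ℝ) : ℂ) * f r (t - tl + sh)) (x - xl)) := by
  refine (test_dX (Tf_contDiff xl tl l1 δ1 l2 δ2 κ sh ξ hf) x t).unique ?_
  unfold Tf
  have hS : HasDerivAt (fun x => Sx ξ (fun r => f r (t - tl + sh)) (x - xl))
      (∑ r, f r (t - tl + sh) * (Complex.exp (Complex.I * (ξ r : ℂ) * ((x - xl : ℝ) : ℂ)) * (Complex.I * (ξ r : ℂ)))) x := by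
    unfold Sx
    exact HasDerivAt.fun_sum fun r _ => (exp_hd (ξ r) xl x).const_mul _
  have := (((etac_hd l1 δ1 xl x).mul_const ((etac l2 δ2 (t - tl) : ℝ) : ℂ)).mul (exp_hd κ xl x)).mul hS
  refine this.congr_deriv ?_
  have e : Sx ξ (fun r => Complex.I * ((κ + ξ r : ℝ) : ℂ) * f r (t - tl + sh)) (x - xl)
      = Complex.I * κ * Sx ξ (fun r => f r (t - tl + sh)) (x - xl) +
      ∑ r, f r (t - tl + sh) * (Complex.exp (Complex.I * (ξ r : ℂ) * ((x - xl : ℝ) : ℂ)) * (Complex.I * (ξ r : ℂ))) := by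
    simp only [Sx, Finset.mul_sum, ← Finset.sum_add_distrib]
    refine Finset.sum_congr rfl fun r _ => ?_
    push_cast; ring
  simp only [Pi.mul_apply]
  rw [e]
  ring

theorem Tf_dY {R : ℕ} (xl tl l1 δ1 l2 δ2 κ sh : ℝ) (ξ : Fin R → ℝ) {f : Fin R → ℝ → ℂ}
    (hf : ∀ r, ContDiff ℝ (⊤ : ℕ∞) (f r)) (x t : ℝ) :
    dY (Tf xl tl l1 δ1 l2 δ2 κ sh ξ f) (x, t) =
      Complex.exp (Complex.I * (κ : ℂ) * ((x - xl : ℝ) : ℂ)) *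
      (((etac l1 δ1 (x - xl) : ℝ) : ℂ) * Sx ξ (fun r => ((deriv (etac l2 δ2) (t - tl) : ℝ) : ℂ) * f r (t - tl + sh)
        + ((etac l2 δ2 (t - tl) : ℝ) : ℂ) * deriv (f r) (t - tl + sh)) (x - xl)) := by
  refine (test_dY (Tf_contDiff xl tl l1 δ1 l2 δ2 κ sh ξ hf) x t).unique ?_
  unfold Tf
  have hS : HasDerivAt (fun t => Sx ξ (fun r => f r (t - tl + sh)) (x - xl))
      (Sx ξ (fun r => deriv (f r) (t - tl + sh)) (x - xl)) t := by
    unfold Sx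
    refine HasDerivAt.fun_sum fun r _ => HasDerivAt.mul_const ?_ _
    have h := (((hf r).differentiable (by norm_num)) (t - tl + sh)).hasDerivAt
    have h2 : HasDerivAt (fun t => t - tl + sh) 1 t := ((hasDerivAt_id t).sub_const tl).add_const sh
    have := h.scomp t h2
    simpa [Function.comp_def] using this
  have := (((etac_hd l2 δ2 tl t).const_mul ((etac l1 δ1 (x - xl) : ℝ) : ℂ)).mul_const
    (Complex.exp (Complex.I * (κ : ℂ) * ((x - xl : ℝ) : ℂ)))).mul hS
  refine this.congr_deriv ?_
  have e : Sx ξ (fun r => ((deriv (etac l2 δ2) (t - tl) : ℝ) : ℂ) * f r (t - tl + sh)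
        + ((etac l2 δ2 (t - tl) : ℝ) : ℂ) * deriv (f r) (t - tl + sh)) (x - xl)
      = ((deriv (etac l2 δ2) (t - tl) : ℝ) : ℂ) * Sx ξ (fun r => f r (t - tl + sh)) (x - xl)
       + ((etac l2 δ2 (t - tl) : ℝ) : ℂ) * Sx ξ (fun r => deriv (f r) (t - tl + sh)) (x - xl) := by
    simp only [Sx, Finset.mul_sum, ← Finset.sum_add_distrib]
    refine Finset.sum_congr rfl fun r _ => ?_
    ring
  rw [e]
  ring

theorem Tf_test {R : ℕ} {xl tl l1 δ1 l2 δ2 κ sh : ℝ} (ξ : Fin R → ℝ) {f : Fin R → ℝ → ℂ}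
    (hf : ∀ r, ContDiff ℝ (⊤ : ℕ∞) (f r)) (h1 : 0 < δ1) (h2 : 0 < δ2) {A B C D : ℝ}
    (hA : A < xl) (hB : xl + l1 + δ1 < B) (hC : C < tl) (hD : tl + l2 + δ2 < D) :
    IsTestOn (Set.Ioo A B ×ˢ Set.Ioo C D) (Tf xl tl l1 δ1 l2 δ2 κ sh ξ f) := by
  have hz : ∀ p, p ∉ Set.Icc xl (xl + l1 + δ1) ×ˢ Set.Icc tl (tl + l2 + δ2) →
      Tf xl tl l1 δ1 l2 δ2 κ sh ξ f p = 0 := by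
    intro p hp
    rw [Set.mem_prod, not_and_or, Set.mem_Icc, Set.mem_Icc, not_and_or, not_and_or] at hp
    unfold Tf
    rcases hp with (h | h) | (h | h) <;> push Not at h
    · rw [etac_zero_left (x := p.1 - xl) h1 (by linarith)]; simp
    · rw [etac_zero_right (x := p.1 - xl) h1 (by linarith)]; simp
    · rw [etac_zero_left (x := p.2 - tl) h2 (by linarith)]; simp
    · rw [etac_zero_right (x := p.2 - tl) h2 (by linarith)]; simp
  refine ⟨Tf_contDiff _ _ _ _ _ _ _ _ _ hf,
    HasCompactSupport.intro (isCompact_Icc.prod isCompact_Icc) hz, ?_⟩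
  have : tsupport (Tf xl tl l1 δ1 l2 δ2 κ sh ξ f) ⊆ Set.Icc xl (xl + l1 + δ1) ×ˢ Set.Icc tl (tl + l2 + δ2) := by
    refine closure_minimal ?_ (isClosed_Icc.prod isClosed_Icc)
    intro p hp
    by_contra h
    exact hp (hz p h)
  refine this.trans (Set.prod_mono ?_ ?_)
  · exact Set.Icc_subset_Ioo hA hB
  · exact Set.Icc_subset_Ioo hC hD

def Hint {R : ℕ} (E θ l1 δ1 : ℝ) (ξ : Fin R → ℝ) (z y q : Fin R → ℂ) (x : ℝ) : ℝ :=
  ‖-Complex.I * ((E * deriv (etac l1 δ1) x : ℝ) : ℂ) * Sx ξ z x + (etac l1 δ1 x : ℂ) * Sx ξ y x‖ ^ 2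
      + ‖(etac l1 δ1 x : ℂ) * Sx ξ q x‖ ^ 2 + θ * ‖(etac l1 δ1 x : ℂ) * Sx ξ z x‖ ^ 2

theorem norm_expI (k x : ℝ) : ‖Complex.exp (Complex.I * (k : ℂ) * (x : ℂ))‖ = 1 := by
  have : Complex.I * (k : ℂ) * (x : ℂ) = ((k * x : ℝ) : ℂ) * Complex.I := by push_cast; ring
  rw [this, Complex.norm_exp_ofReal_mul_I]

theorem Tf_point {R : ℕ} {xl tl l1 δ1 l2 δ2 κ sh t₀ b₀ lam : ℝ} (ξ : Fin R → ℝ) {f : Fin R → ℝ → ℂ}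
    (hf : ∀ r, ContDiff ℝ (⊤ : ℕ∞) (f r)) (P : Fin R → ℝ → ℝ)
    (hP : ∀ r t, Real.exp t₀ * (κ + ξ r) + (t - t₀) * b₀ = P r (t - tl + sh)) (x t : ℝ) :
    (Real.exp (2 * t₀) * ‖-Complex.I * dX (Tf xl tl l1 δ1 l2 δ2 κ sh ξ f) (x, t)
        - (Azero t₀ b₀ (x, t) : ℂ) * Tf xl tl l1 δ1 l2 δ2 κ sh ξ f (x, t)‖ ^ 2
      + ‖dY (Tf xl tl l1 δ1 l2 δ2 κ sh ξ f) (x, t)‖ ^ 2 + (1/4) * ‖Tf xl tl l1 δ1 l2 δ2 κ sh ξ f (x, t)‖ ^ 2)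
      - lam * ‖Tf xl tl l1 δ1 l2 δ2 κ sh ξ f (x, t)‖ ^ 2
    = Hint (Real.exp t₀) (1 / 4 - lam) l1 δ1 ξ
        (fun r => ((etac l2 δ2 (t - tl) : ℝ) : ℂ) * f r (t - tl + sh))
        (fun r => ((P r (t - tl + sh) : ℝ) : ℂ) * (((etac l2 δ2 (t - tl) : ℝ) : ℂ) * f r (t - tl + sh)))
        (fun r => ((deriv (etac l2 δ2) (t - tl) : ℝ) : ℂ) * f r (t - tl + sh)
          + ((etac l2 δ2 (t - tl) : ℝ) : ℂ) * deriv (f r) (t - tl + sh)) (x - xl) := by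
  set E := Real.exp t₀ with hE
  have hEE : Real.exp (2 * t₀) = E ^ 2 := by rw [hE, ← Real.exp_nat_mul]; norm_num
  have hE0 : 0 < E := Real.exp_pos _
  have hAE : E * Azero t₀ b₀ (x, t) = -((t - t₀) * b₀) := by
    unfold Azero; rw [Real.exp_neg, ← hE]; field_simp
  set e := Complex.exp (Complex.I * (κ : ℂ) * ((x - xl : ℝ) : ℂ)) with he
  have hn : ‖e‖ = 1 := norm_expI _ _
  have c1 : E ^ 2 * ‖-Complex.I * dX (Tf xl tl l1 δ1 l2 δ2 κ sh ξ f) (x, t)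
        - (Azero t₀ b₀ (x, t) : ℂ) * Tf xl tl l1 δ1 l2 δ2 κ sh ξ f (x, t)‖ ^ 2
      = ‖-Complex.I * ((E * deriv (etac l1 δ1) (x - xl) : ℝ) : ℂ) * Sx ξ (fun r => ((etac l2 δ2 (t - tl) : ℝ) : ℂ) * f r (t - tl + sh)) (x - xl)
        + (etac l1 δ1 (x - xl) : ℂ) * Sx ξ (fun r => ((P r (t - tl + sh) : ℝ) : ℂ) * (((etac l2 δ2 (t - tl) : ℝ) : ℂ) * f r (t - tl + sh))) (x - xl)‖ ^ 2 := by
    have : (E : ℂ) * (-Complex.I * dX (Tf xl tl l1 δ1 l2 δ2 κ sh ξ f) (x, t)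
        - (Azero t₀ b₀ (x, t) : ℂ) * Tf xl tl l1 δ1 l2 δ2 κ sh ξ f (x, t))
      = e * (-Complex.I * ((E * deriv (etac l1 δ1) (x - xl) : ℝ) : ℂ) * Sx ξ (fun r => ((etac l2 δ2 (t - tl) : ℝ) : ℂ) * f r (t - tl + sh)) (x - xl)
        + (etac l1 δ1 (x - xl) : ℂ) * Sx ξ (fun r => ((P r (t - tl + sh) : ℝ) : ℂ) * (((etac l2 δ2 (t - tl) : ℝ) : ℂ) * f r (t - tl + sh))) (x - xl)) := by
      have hS : Sx ξ (fun r => ((P r (t - tl + sh) : ℝ) : ℂ) * (((etac l2 δ2 (t - tl) : ℝ) : ℂ) * f r (t - tl + sh))) (x - xl)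
          = ((etac l2 δ2 (t - tl) : ℝ) : ℂ) * (-Complex.I * E * Sx ξ (fun r => Complex.I * ((κ + ξ r : ℝ) : ℂ) * f r (t - tl + sh)) (x - xl)
            - ((E * Azero t₀ b₀ (x, t) : ℝ) : ℂ) * Sx ξ (fun r => f r (t - tl + sh)) (x - xl)) := by
        rw [hAE]
        simp only [Sx, Finset.mul_sum, ← Finset.sum_sub_distrib, ← hP]
        refine Finset.sum_congr rfl fun r _ => ?_
        push_cast
        linear_combination ((E : ℂ) * (κ + ξ r) * f r (t - tl + sh) * ((etac l2 δ2 (t - tl) : ℝ) : ℂ) *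
          Complex.exp (Complex.I * (ξ r : ℂ) * (x - xl))) * (Complex.I_mul_I)
      rw [Tf_dX _ _ _ _ _ _ _ _ _ hf, hS, Sx_smul]
      simp only [Tf]
      rw [← he]
      push_cast
      ring
    have h2 := congrArg (fun z => ‖z‖ ^ 2) this
    simp only [norm_mul, hn, one_mul, mul_pow, Complex.norm_real, Real.norm_eq_abs, sq_abs] at h2
    rw [h2]
  have c2 : ‖dY (Tf xl tl l1 δ1 l2 δ2 κ sh ξ f) (x, t)‖ ^ 2 = ‖(etac l1 δ1 (x - xl) : ℂ) * Sx ξ (fun r => ((deriv (etac l2 δ2) (t - tl) : ℝ) : ℂ) * f r (t - tl + sh)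
          + ((etac l2 δ2 (t - tl) : ℝ) : ℂ) * deriv (f r) (t - tl + sh)) (x - xl)‖ ^ 2 := by
    rw [Tf_dY _ _ _ _ _ _ _ _ _ hf, ← he, norm_mul e, hn, one_mul]
  have c3 : ‖Tf xl tl l1 δ1 l2 δ2 κ sh ξ f (x, t)‖ ^ 2 = ‖(etac l1 δ1 (x - xl) : ℂ) * Sx ξ (fun r => ((etac l2 δ2 (t - tl) : ℝ) : ℂ) * f r (t - tl + sh)) (x - xl)‖ ^ 2 := by
    have : Tf xl tl l1 δ1 l2 δ2 κ sh ξ f (x, t) = e * ((etac l1 δ1 (x - xl) : ℂ) * Sx ξ (fun r => ((etac l2 δ2 (t - tl) : ℝ) : ℂ) * f r (t - tl + sh)) (x - xl)) := by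
      rw [Sx_smul]; simp only [Tf]; rw [← he]; ring
    rw [this, norm_mul e, hn, one_mul]
  rw [hEE, c1, c2, c3, Hint]
  ring

theorem plane_int {g : ℝ × ℝ → ℝ} (hg : Continuous g) (hc : HasCompactSupport g) {G : ℝ → ℝ}
    (hG : Integrable G) (h : ∀ t, ∫ x, g (x, t) ≤ G t) : ∫ p, g p ≤ ∫ t, G t := by
  have hi : Integrable g := hg.integrable_of_hasCompactSupport hc
  rw [Measure.volume_eq_prod] at hi ⊢
  rw [integral_prod_symm _ hi]
  exact integral_mono hi.integral_prod_right hG h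

theorem Tf_energy {C1 : ℝ} (hC1 : ∀ l δ x : ℝ, 0 < δ → |deriv (etac l δ) x| ≤ C1 / δ)
    {R : ℕ} {xl tl l1 δ1 l2 δ2 κ sh x₀ t₀ a ε₀ b₀ lam s : ℝ} (ξ : Fin R → ℝ) {f : Fin R → ℝ → ℂ}
    (hf : ∀ r, ContDiff ℝ (⊤ : ℕ∞) (f r)) (P : Fin R → ℝ → ℝ) (hPc : ∀ r, Continuous (P r))
    (hP : ∀ r t, Real.exp t₀ * (κ + ξ r) + (t - t₀) * b₀ = P r (t - tl + sh))
    (h1 : 0 < δ1) (h2 : 0 < δ2) (hl1 : δ1 ≤ l1)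
    (hs : s = 1 ∨ s = -1) (hξ : ∀ r, ξ r = s * (2 * π * (r : ℕ) / l1))
    (hK : IsTestOn (Krect x₀ t₀ a ε₀) (Tf xl tl l1 δ1 l2 δ2 κ sh ξ f)) :
    qK0 x₀ t₀ a ε₀ b₀ (Tf xl tl l1 δ1 l2 δ2 κ sh ξ f) -
      lam * ∫ p in Krect x₀ t₀ a ε₀, ‖Tf xl tl l1 δ1 l2 δ2 κ sh ξ f p‖ ^ 2
    ≤ l1 * ∑ r, ∫ t, ((2 * Real.exp t₀ ^ 2 * (C1 / δ1) ^ 2 + (1 / 4 - lam) + P r (t + sh) ^ 2) *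
        ‖((etac l2 δ2 t : ℝ) : ℂ) * f r (t + sh)‖ ^ 2
      + ‖((deriv (etac l2 δ2) t : ℝ) : ℂ) * f r (t + sh)
          + ((etac l2 δ2 t : ℝ) : ℂ) * deriv (f r) (t + sh)‖ ^ 2) := by
  set w := Tf xl tl l1 δ1 l2 δ2 κ sh ξ f with hw
  obtain ⟨hws, hwc, hwK⟩ := hK
  have hcu := hws.continuous
  have hcx := dX_cont hws
  have hcy := dY_cont hws
  have hA := Azero_cont t₀ b₀
  have ce : Continuous (etac l2 δ2) := (etac_contDiff l2 δ2).continuous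
  have cd := etac_deriv_cont l2 δ2
  have cf : ∀ r, Continuous (f r) := fun r => (hf r).continuous
  have cf' : ∀ r, Continuous (deriv (f r)) := fun r => (hf r).continuous_deriv (by norm_num)
  set g : ℝ × ℝ → ℝ := fun p => (Real.exp (2 * t₀) * ‖-Complex.I * dX w p - (Azero t₀ b₀ p : ℂ) * w p‖ ^ 2
      + ‖dY w p‖ ^ 2 + (1/4) * ‖w p‖ ^ 2) - lam * ‖w p‖ ^ 2 with hg
  have hgc : Continuous g := by rw [hg]; fun_prop
  have hzero : ∀ p, p ∉ tsupport w → g p = 0 := by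
    intro p hp
    have z1 : w p = 0 := image_eq_zero_of_notMem_tsupport hp
    have z2 : fderiv ℝ w p = 0 := by
      by_contra hh
      exact hp (support_fderiv_subset ℝ hh)
    simp [hg, z1, dX, dY, z2]
  have hgs : HasCompactSupport g := HasCompactSupport.intro hwc hzero
  have e1 : qK0 x₀ t₀ a ε₀ b₀ w - lam * ∫ p in Krect x₀ t₀ a ε₀, ‖w p‖ ^ 2 = ∫ p, g p := by
    rw [← setIntegral_eq_integral_of_forall_compl_eq_zero (s := Krect x₀ t₀ a ε₀)
      (fun p hp => hzero p (fun h => hp (hwK h)))]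
    rw [← integral_const_mul, qK0, ← integral_sub]
    · exact intOnK (by fun_prop) _ _ _ _
    · exact intOnK (by fun_prop) _ _ _ _
  rw [e1]
  set Gr : Fin R → ℝ → ℝ := fun r t => (2 * Real.exp t₀ ^ 2 * (C1 / δ1) ^ 2 + (1 / 4 - lam) + P r (t + sh) ^ 2) *
        ‖((etac l2 δ2 t : ℝ) : ℂ) * f r (t + sh)‖ ^ 2
      + ‖((deriv (etac l2 δ2) t : ℝ) : ℂ) * f r (t + sh)
          + ((etac l2 δ2 t : ℝ) : ℂ) * deriv (f r) (t + sh)‖ ^ 2 with hGr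
  have hGc : ∀ r, Continuous (Gr r) := by
    intro r
    have := cf r
    have := cf' r
    have := hPc r
    rw [hGr]; fun_prop
  have hGi : ∀ r, Integrable (Gr r) := by
    intro r
    refine (hGc r).integrable_of_hasCompactSupport (cpt_of_out (a := 0) (b := l2 + δ2) ?_ ?_)
    · intro t ht
      simp [hGr, etac_zero_left h2 ht, etac_deriv_left h2 ht]
    · intro t ht
      simp [hGr, etac_zero_right h2 ht, etac_deriv_right h2 ht]
  have e2 : l1 * ∑ r, ∫ t, Gr r t = ∫ t, l1 * ∑ r, Gr r (t - tl) := by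
    rw [integral_sub_right_eq_self (fun t => l1 * ∑ r, Gr r t) tl, integral_const_mul,
      integral_finsetSum _ (fun r _ => hGi r)]
  rw [e2]
  refine plane_int hgc hgs ?_ ?_
  · refine (integrable_finsetSum _ (fun r _ => (hGi r).comp_sub_right tl)).const_mul l1
  · intro t
    have : ∀ x, g (x, t) = _ := fun x => Tf_point (lam := lam) ξ hf P hP x t
    simp only [this]
    rw [integral_sub_right_eq_self (fun x => Hint (Real.exp t₀) (1 / 4 - lam) l1 δ1 ξ
        (fun r => ((etac l2 δ2 (t - tl) : ℝ) : ℂ) * f r (t - tl + sh))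
        (fun r => ((P r (t - tl + sh) : ℝ) : ℂ) * (((etac l2 δ2 (t - tl) : ℝ) : ℂ) * f r (t - tl + sh)))
        (fun r => ((deriv (etac l2 δ2) (t - tl) : ℝ) : ℂ) * f r (t - tl + sh)
          + ((etac l2 δ2 (t - tl) : ℝ) : ℂ) * deriv (f r) (t - tl + sh)) x) xl]
    refine (x_lemma hC1 h1 hl1 hs hξ _ _ _).trans (le_of_eq ?_)
    congr 1
    refine Finset.sum_congr rfl fun r _ => ?_
    simp only [hGr, norm_mul (((P r (t - tl + sh) : ℝ) : ℂ)), mul_pow, Complex.norm_real, Real.norm_eq_abs, sq_abs]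
    ring

def fo {M : ℕ} (g : Fin (M + 1) → ℝ → ℝ) (c : Fin (M + 1) → ℂ) (m s : ℝ) : ℂ :=
  ∑ k, c k * ((g k (s - m) : ℝ) : ℂ)

theorem fo_contDiff {M : ℕ} {g : Fin (M + 1) → ℝ → ℝ} (hg : ∀ k, ContDiff ℝ (⊤ : ℕ∞) (g k))
    (c : Fin (M + 1) → ℂ) (m : ℝ) : ContDiff ℝ (⊤ : ℕ∞) (fo g c m) := by
  unfold fo
  refine ContDiff.sum fun k _ => ?_
  exact contDiff_const.mul (ofReal_cd.comp ((hg k).comp (contDiff_id.sub contDiff_const)))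

theorem fo_deriv {M : ℕ} {g : Fin (M + 1) → ℝ → ℝ} (hg : ∀ k, ContDiff ℝ (⊤ : ℕ∞) (g k))
    (c : Fin (M + 1) → ℂ) (m s : ℝ) :
    deriv (fo g c m) s = ∑ k, c k * ((deriv (g k) (s - m) : ℝ) : ℂ) := by
  have : HasDerivAt (fo g c m) (∑ k, c k * ((deriv (g k) (s - m) : ℝ) : ℂ)) s := by
    unfold fo
    refine HasDerivAt.fun_sum fun k _ => ?_
    refine HasDerivAt.const_mul _ ?_
    refine HasDerivAt.ofReal_comp ?_
    have h1 : HasDerivAt (g k) (deriv (g k) (s - m)) (s - m) :=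
      ((hg k).differentiable (by norm_num) _).hasDerivAt
    exact h1.comp_sub_const s m
  exact this.deriv

theorem g_deriv_zero {g : ℝ → ℝ} (hg : ContDiff ℝ (⊤ : ℕ∞) g) {ρ : ℝ} 
    (h0 : ∀ s, ρ ≤ |s| → g s = 0) (s : ℝ) (hs : ρ ≤ |s|) : deriv g s = 0 := by
  have hd : HasDerivAt g (deriv g s) s := (hg.differentiable (by norm_num) _).hasDerivAt
  rcases le_or_gt 0 s with h | h
  · have h1 : HasDerivWithinAt g 0 (Set.Ici s) s := by
      refine (hasDerivWithinAt_const s (Set.Ici s) (0 : ℝ)).congr ?_ (h0 s hs)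
      intro y hy
      apply h0
      have hy : s ≤ y := hy
      rw [abs_of_nonneg h] at hs
      exact hs.trans (hy.trans (le_abs_self y))
    exact (uniqueDiffWithinAt_Ici s).eq_deriv _ hd.hasDerivWithinAt h1
  · have h1 : HasDerivWithinAt g 0 (Set.Iic s) s := by
      refine (hasDerivWithinAt_const s (Set.Iic s) (0 : ℝ)).congr ?_ (h0 s hs)
      intro y hy
      apply h0
      have hy : y ≤ s := hy
      rw [abs_of_neg h] at hs
      have := neg_le_abs y
      linarith
    exact (uniqueDiffWithinAt_Iic s).eq_deriv _ hd.hasDerivWithinAt h1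

theorem fo_supp {M : ℕ} {g : Fin (M + 1) → ℝ → ℝ} {ρ : ℝ} (h0 : ∀ k s, ρ ≤ |s| → g k s = 0)
    (c : Fin (M + 1) → ℂ) (m s : ℝ) (h : fo g c m s ≠ 0) : m - ρ ≤ s ∧ s ≤ m + ρ := by
  by_contra hn
  apply h
  unfold fo
  refine Finset.sum_eq_zero fun k _ => ?_
  rw [h0 k (s - m) ?_]; · simp
  by_contra h2
  rw [not_le, abs_lt] at h2
  exact hn ⟨by linarith, by linarith⟩

theorem fo_supp' {M : ℕ} {g : Fin (M + 1) → ℝ → ℝ} (hg : ∀ k, ContDiff ℝ (⊤ : ℕ∞) (g k)) {ρ : ℝ}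
    (h0 : ∀ k s, ρ ≤ |s| → g k s = 0)
    (c : Fin (M + 1) → ℂ) (m s : ℝ) (h : deriv (fo g c m) s ≠ 0) : m - ρ ≤ s ∧ s ≤ m + ρ := by
  rw [fo_deriv hg] at h
  exact fo_supp (g := fun k => deriv (g k)) (fun k s hs => g_deriv_zero (hg k) (h0 k) s hs) c m s h

theorem fo_neg {M : ℕ} {g : Fin (M + 1) → ℝ → ℝ} (hg : ∀ k, ContDiff ℝ (⊤ : ℕ∞) (g k)) {b₀ μ W D : ℝ}
    (hosc : ∀ c : Fin (M + 1) → ℂ, c ≠ 0 → ∫ s, (‖∑ k, c k * ((deriv (g k) s : ℝ) : ℂ)‖ ^ 2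
      + (|b₀| ^ 2 * s ^ 2 - μ) * ‖∑ k, c k * (g k s : ℂ)‖ ^ 2) < 0) (hW : W + D = -μ)
    (c : Fin (M + 1) → ℂ) (m : ℝ) (hc : c ≠ 0) :
    ∫ s, ((W + (b₀ * (s - m)) ^ 2) * ‖fo g c m s‖ ^ 2 + ‖deriv (fo g c m) s‖ ^ 2 + D * ‖fo g c m s‖ ^ 2) < 0 := by
  refine lt_of_eq_of_lt ?_ (hosc c hc)
  rw [← integral_sub_right_eq_self (fun s => ‖∑ k, c k * ((deriv (g k) s : ℝ) : ℂ)‖ ^ 2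
      + (|b₀| ^ 2 * s ^ 2 - μ) * ‖∑ k, c k * (g k s : ℂ)‖ ^ 2) m]
  congr 1
  funext s
  simp only [fo_deriv hg, fo, sq_abs]
  have : W = -μ - D := by linarith
  rw [this]; ring

theorem fo_zero {M : ℕ} (g : Fin (M + 1) → ℝ → ℝ) (m : ℝ) : fo g 0 m = fun _ => 0 := by
  funext s; simp [fo]

def Tlin {R M : ℕ} (xl tl l1 δ1 l2 δ2 κ sh : ℝ) (ξ m : Fin R → ℝ) (g : Fin (M + 1) → ℝ → ℝ) :
    (Fin R × Fin (M + 1) → ℂ) →ₗ[ℂ] (ℝ × ℝ → ℂ) where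
  toFun v := Tf xl tl l1 δ1 l2 δ2 κ sh ξ (fun r => fo g (fun k => v (r, k)) (m r))
  map_add' u v := by
    funext p
    simp only [Tf, Pi.add_apply, Sx, fo, add_mul, Finset.sum_add_distrib, mul_add]
  map_smul' c v := by
    funext p
    simp only [Tf, Pi.smul_apply, Sx, fo, smul_eq_mul, RingHom.id_apply, Finset.mul_sum, Finset.sum_mul]
    refine Finset.sum_congr rfl fun r _ => Finset.sum_congr rfl fun k _ => ?_
    ring

theorem combine {C1 : ℝ} (hC1 : ∀ l δ x : ℝ, 0 < δ → |deriv (etac l δ) x| ≤ C1 / δ)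
    {x₀ t₀ a ε₀ b₀ lam l1 δ1 l2 δ2 : ℝ} (ha : 0 < a) (hε : 0 < ε₀) (hb : b₀ ≠ 0)
    (h1 : 0 < δ1) (h2 : 0 < δ2) (hl1 : δ1 ≤ l1) (hl2 : δ2 ≤ l2)
    (hw1 : l1 + δ1 < ε₀ * a * Real.exp t₀) (hw2 : l2 + δ2 < ε₀) {M : ℕ}
    (hμ : (2 * (M : ℝ) + 1) * |b₀| <
      lam - 1 / 4 - 2 * Real.exp t₀ ^ 2 * (C1 / δ1) ^ 2 - 2 * (C1 / δ2) ^ 2) :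
    ∃ ρ : ℝ, 0 < ρ ∧ ∀ R n : ℕ, R * (2 * π * Real.exp t₀ / (l1 * |b₀|)) + 2 * ρ + δ2 ≤ n * l2 →
      R * (M + 1) ≤ n * NK0 x₀ t₀ a ε₀ b₀ lam := by
  have hβ : 0 < |b₀| := abs_pos.2 hb
  obtain ⟨g, ρ, hρ, hg, hg0, hosc⟩ := oscillator_complex hβ hμ
  refine ⟨ρ, hρ, fun R n hRn => ?_⟩
  have hE := Real.exp_pos t₀
  have hl1p : 0 < l1 := h1.trans_le hl1
  set E := Real.exp t₀ with hEd
  set d : ℝ := 2 * π * E / (l1 * |b₀|) with hd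
  have hd0 : 0 < d := by positivity
  set σ := ρ + δ2 with hσ
  set m : Fin R → ℝ := fun r => (r : ℕ) * d + σ with hm
  set ξ : Fin R → ℝ := fun r => -b₀ * ((r : ℕ) * d) / E with hξd
  set xl := x₀ - (l1 + δ1) / 2 with hxl
  set tl := t₀ - (l2 + δ2) / 2 with htl
  obtain ⟨s, hs, hsb⟩ : ∃ s : ℝ, (s = 1 ∨ s = -1) ∧ -b₀ = s * |b₀| := by
    rcases lt_or_gt_of_ne hb with h | h
    · exact ⟨1, Or.inl rfl, by rw [abs_of_neg h]; ring⟩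
    · exact ⟨-1, Or.inr rfl, by rw [abs_of_pos h]; ring⟩
  have hξ : ∀ r, ξ r = s * (2 * π * (r : ℕ) / l1) := by
    intro r
    simp only [hξd, hsb, hd]
    field_simp
  set κ : ℝ → ℝ := fun sh => b₀ * (t₀ - tl + sh - σ) / E with hκ
  have hP : ∀ sh r t, E * (κ sh + ξ r) + (t - t₀) * b₀ = b₀ * ((t - tl + sh) - m r) := by
    intro sh r t
    simp only [hκ, hξd, hm]
    field_simp
    ring
  have hmf : ∀ (v : Fin R × Fin (M + 1) → ℂ) r, ContDiff ℝ (⊤ : ℕ∞) (fo g (fun k => v (r, k)) (m r)) :=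
    fun v r => fo_contDiff hg _ _
  have htest : ∀ sh (v : Fin R × Fin (M + 1) → ℂ), IsTestOn (Krect x₀ t₀ a ε₀)
      (Tf xl tl l1 δ1 l2 δ2 (κ sh) sh ξ (fun r => fo g (fun k => v (r, k)) (m r))) := by
    intro sh v
    refine Tf_test ξ (hmf v) h1 h2 ?_ ?_ ?_ ?_ <;> simp only [hxl, htl] <;> linarith
  have hcard := count_main (x₀ := x₀) (t₀ := t₀) (b₀ := b₀) (lam := lam) ha hε
    (ι := Fin R × Fin (M + 1)) (J := Fin n)
    (fun j => Tlin xl tl l1 δ1 l2 δ2 (κ ((j : ℕ) * l2)) ((j : ℕ) * l2) ξ m g)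
    (fun j v => htest _ v) ?_
  · simpa [Fintype.card_prod] using hcard
  intro v hv
  set W := 2 * E ^ 2 * (C1 / δ1) ^ 2 + (1 / 4 - lam) with hW
  set Vr : Fin R → ℝ → ℝ := fun r s => W + (b₀ * (s - m r)) ^ 2 with hVr
  set f : Fin R → ℝ → ℂ := fun r => fo g (fun k => v (r, k)) (m r) with hfd
  have step1 : ∀ j : Fin n, qK0 x₀ t₀ a ε₀ b₀ (Tlin xl tl l1 δ1 l2 δ2 (κ ((j : ℕ) * l2)) ((j : ℕ) * l2) ξ m g v)
      - lam * ∫ p in Krect x₀ t₀ a ε₀, ‖Tlin xl tl l1 δ1 l2 δ2 (κ ((j : ℕ) * l2)) ((j : ℕ) * l2) ξ m g v p‖ ^ 2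
      ≤ l1 * ∑ r, ∫ t, (Vr r (t + (j : ℕ) * l2) * ‖((etac l2 δ2 t : ℝ) : ℂ) * f r (t + (j : ℕ) * l2)‖ ^ 2
      + ‖((deriv (etac l2 δ2) t : ℝ) : ℂ) * f r (t + (j : ℕ) * l2)
          + ((etac l2 δ2 t : ℝ) : ℂ) * deriv (f r) (t + (j : ℕ) * l2)‖ ^ 2) := by
    intro j
    exact Tf_energy hC1 ξ (hmf v) (fun r s => b₀ * (s - m r)) (fun r => by fun_prop)
      (hP _) h1 h2 hl1 hs hξ (htest _ v)
  have step2 : ∀ r, ∑ j : Fin n, ∫ t, (Vr r (t + (j : ℕ) * l2) * ‖((etac l2 δ2 t : ℝ) : ℂ) * f r (t + (j : ℕ) * l2)‖ ^ 2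
      + ‖((deriv (etac l2 δ2) t : ℝ) : ℂ) * f r (t + (j : ℕ) * l2)
          + ((etac l2 δ2 t : ℝ) : ℂ) * deriv (f r) (t + (j : ℕ) * l2)‖ ^ 2)
      ≤ ∫ s, (Vr r s * ‖f r s‖ ^ 2 + ‖deriv (f r) s‖ ^ 2 + 2 * (C1 / δ2) ^ 2 * ‖f r s‖ ^ 2) := by
    intro r
    have hr : ((r : ℕ) : ℝ) * d ≤ R * d := by
      apply mul_le_mul_of_nonneg_right _ hd0.le
      exact_mod_cast r.2.le
    have hr0 : 0 ≤ ((r : ℕ) : ℝ) * d := by positivity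
    have key : ∀ s, m r - ρ ≤ s ∧ s ≤ m r + ρ → δ2 ≤ s ∧ s ≤ n * l2 := by
      rintro s ⟨hs1, hs2⟩
      simp only [hm, hσ] at hs1 hs2
      constructor <;> linarith
    refine t_lemma hC1 n h2 hl2 (hmf v r).continuous ((hmf v r).continuous_deriv (by norm_num))
      (by simp only [hVr]; fun_prop) ?_ ?_
    · exact fun s h => key s (fo_supp hg0 _ _ s h)
    · exact fun s h => key s (fo_supp' hg hg0 _ _ s h)
  have hneg : ∀ r, (fun k => v (r, k)) ≠ 0 → ∫ s, (Vr r s * ‖f r s‖ ^ 2 + ‖deriv (f r) s‖ ^ 2 + 2 * (C1 / δ2) ^ 2 * ‖f r s‖ ^ 2) < 0 := by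
    intro r hr
    exact fo_neg hg hosc (by rw [hW]; ring) _ (m r) hr
  have hnonpos : ∀ r, ∫ s, (Vr r s * ‖f r s‖ ^ 2 + ‖deriv (f r) s‖ ^ 2 + 2 * (C1 / δ2) ^ 2 * ‖f r s‖ ^ 2) ≤ 0 := by
    intro r
    by_cases hr : (fun k => v (r, k)) = 0
    · have : f r = fun _ => 0 := by simp only [hfd, hr, fo_zero]
      simp [this]
    · exact (hneg r hr).le
  obtain ⟨⟨r0, k0⟩, hv0⟩ := Function.ne_iff.1 hv
  calc _ ≤ ∑ j : Fin n, l1 * ∑ r, ∫ t, (Vr r (t + (j : ℕ) * l2) * ‖((etac l2 δ2 t : ℝ) : ℂ) * f r (t + (j : ℕ) * l2)‖ ^ 2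
      + ‖((deriv (etac l2 δ2) t : ℝ) : ℂ) * f r (t + (j : ℕ) * l2)
          + ((etac l2 δ2 t : ℝ) : ℂ) * deriv (f r) (t + (j : ℕ) * l2)‖ ^ 2) :=
        Finset.sum_le_sum fun j _ => step1 j
    _ = l1 * ∑ r, ∑ j : Fin n, ∫ t, (Vr r (t + (j : ℕ) * l2) * ‖((etac l2 δ2 t : ℝ) : ℂ) * f r (t + (j : ℕ) * l2)‖ ^ 2
      + ‖((deriv (etac l2 δ2) t : ℝ) : ℂ) * f r (t + (j : ℕ) * l2)
          + ((etac l2 δ2 t : ℝ) : ℂ) * deriv (f r) (t + (j : ℕ) * l2)‖ ^ 2) := by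
        rw [← Finset.mul_sum, Finset.sum_comm]
    _ ≤ l1 * ∑ r, ∫ s, (Vr r s * ‖f r s‖ ^ 2 + ‖deriv (f r) s‖ ^ 2 + 2 * (C1 / δ2) ^ 2 * ‖f r s‖ ^ 2) :=
        mul_le_mul_of_nonneg_left (Finset.sum_le_sum fun r _ => step2 r) hl1p.le
    _ < 0 := by
        refine mul_neg_of_pos_of_neg hl1p ?_
        refine Finset.sum_neg' (fun r _ => hnonpos r) ⟨r0, Finset.mem_univ _, hneg r0 ?_⟩
        intro h
        exact hv0 (congrFun h k0)

theorem heav_sum {β μ : ℝ} (hβ : 0 < β) : (∑' k : ℕ, heav (μ - (2 * (k : ℝ) + 1) * β) = 0) ∨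
    ∃ M : ℕ, (2 * (M : ℝ) + 1) * β < μ ∧ ∑' k : ℕ, heav (μ - (2 * (k : ℝ) + 1) * β) = (M : ℝ) + 1 := by
  classical
  have hex : ∃ k : ℕ, μ ≤ (2 * (k : ℝ) + 1) * β := by
    obtain ⟨k, hk⟩ := exists_nat_ge (μ / β)
    refine ⟨k, ?_⟩
    rw [div_le_iff₀ hβ] at hk
    have : 0 ≤ ((k : ℝ) + 1) * β := by positivity
    nlinarith
  set m := Nat.find hex with hm
  have hspec := Nat.find_spec hex
  have hmin : ∀ k < m, (2 * (k : ℝ) + 1) * β < μ := fun k hk => not_le.1 (Nat.find_min hex hk)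
  have hsum : ∑' k : ℕ, heav (μ - (2 * (k : ℝ) + 1) * β) = m := by
    rw [tsum_eq_sum (s := Finset.range m)]
    · rw [Finset.sum_congr rfl (g := fun _ => (1 : ℝ))]
      · simp
      · intro k hk
        have := hmin k (Finset.mem_range.1 hk)
        simp only [heav]; rw [if_pos (by linarith)]
    · intro k hk
      have hk : m ≤ k := by simpa using hk
      have : (2 * (m : ℝ) + 1) * β ≤ (2 * (k : ℝ) + 1) * β := by
        have : (m : ℝ) ≤ k := by exact_mod_cast hk
        gcongr
      simp only [heav]; rw [if_neg (by linarith)]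
  rcases Nat.eq_zero_or_pos m with h | h
  · left; rw [hsum, h]; simp
  · right
    refine ⟨m - 1, hmin _ (by omega), ?_⟩
    rw [hsum]
    have : m = (m - 1) + 1 := by omega
    exact_mod_cast this

theorem asym {q d l ρ' : ℝ} {m N : ℕ} (hd : 0 < d) (hq : 0 ≤ q) (h : q * d < l)
    (H : ∀ R n : ℕ, R * d + ρ' ≤ n * l → R * m ≤ n * N) : q * m ≤ (N : ℝ) := by
  obtain ⟨n, hn⟩ := exists_nat_gt (max 1 ((ρ' + d) / (l - q * d)))
  have hn1 : (1 : ℝ) < n := (le_max_left _ _).trans_lt hn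
  have hn2 := (le_max_right _ _).trans_lt hn
  rw [div_lt_iff₀ (by linarith)] at hn2
  have hn0 : (0 : ℝ) < n := by linarith
  have hR1 := Nat.le_ceil (q * n)
  have hR2 := Nat.ceil_lt_add_one (a := q * n) (by positivity)
  set R := ⌈q * n⌉₊
  have hR := H R n (by
    have : (R : ℝ) * d ≤ (q * n + 1) * d := by gcongr
    nlinarith)
  have hR' : (R : ℝ) * m ≤ n * N := by exact_mod_cast hR
  have : (q * n) * m ≤ n * N := le_trans (by gcongr) hR'
  have h3 : (q * m) * n ≤ N * n := by linarith
  exact le_of_mul_le_mul_right h3 hn0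

/-- lower bound for the counting function of `q^{A⁰,0}_K`. -/
theorem counting_lower_bound_rectangle
    (a₀ : ℝ) (ha₀ : 1 < a₀) :
    ∃ C₀ > 0, ∀ a ε₀ x₀ t₀ b₀ lam : ℝ, 1 / a₀ < a → a ≤ a₀ →
      0 < ε₀ → ε₀ < 1 → b₀ ≠ 0 →
      (ε₀⁻¹) ^ 2 / C₀ ≤ |b₀| → |b₀| ≤ lam →
      ∀ τ : ℝ, 0 < τ → τ < 1 →
        (1 - τ) ^ 2 * ((a * ε₀ ^ 2 * Real.exp t₀) * |b₀| / (2 * π * Real.exp t₀)) *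
            ∑' k : ℕ, heav (lam - 1/4 - C₀ / (τ * ε₀) ^ 2 - (2 * (k : ℝ) + 1) * |b₀|)
          ≤ (NK0 x₀ t₀ a ε₀ b₀ lam : ℝ) := by
  obtain ⟨C1, hC1p, hC1⟩ := etac_deriv_bound
  refine ⟨32 * C1 ^ 2 * (a₀ ^ 2 + 1), by positivity, ?_⟩
  intro a ε₀ x₀ t₀ b₀ lam ha1 _ hε _ hb _ _ τ hτ0 hτ1
  have hβ : 0 < |b₀| := abs_pos.2 hb
  have ha₀p : 0 < a₀ := by linarith
  have ha : 0 < a := lt_trans (by positivity) ha1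
  have hE := Real.exp_pos t₀
  rcases heav_sum (μ := lam - 1/4 - 32 * C1 ^ 2 * (a₀ ^ 2 + 1) / (τ * ε₀) ^ 2) hβ with h0 | ⟨M, hM, hsum⟩
  · rw [h0, mul_zero]; positivity
  rw [hsum]
  set E := Real.exp t₀ with hEd
  set w := ε₀ * a * E with hw
  have hwp : 0 < w := by positivity
  have hτw : 0 < τ * w := by positivity
  have hτε : 0 < τ * ε₀ := by positivity
  have hτw1 : τ * w < w := by nlinarith
  have hτε1 : τ * ε₀ < ε₀ := by nlinarith
  have hinv : 1 / a ^ 2 ≤ a₀ ^ 2 := by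
    rw [div_lt_iff₀ ha₀p] at ha1
    rw [div_le_iff₀ (by positivity)]
    nlinarith
  have hC : 2 * E ^ 2 * (C1 / (τ * w / 4)) ^ 2 + 2 * (C1 / (τ * ε₀ / 4)) ^ 2
      ≤ 32 * C1 ^ 2 * (a₀ ^ 2 + 1) / (τ * ε₀) ^ 2 := by
    have e : 2 * E ^ 2 * (C1 / (τ * w / 4)) ^ 2 + 2 * (C1 / (τ * ε₀ / 4)) ^ 2
      = 32 * C1 ^ 2 * (1 / a ^ 2 + 1) / (τ * ε₀) ^ 2 := by
      rw [hw]; field_simp; ring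
    rw [e]
    gcongr
  obtain ⟨ρ, hρ, H⟩ := combine (x₀ := x₀) (t₀ := t₀) (a := a) (ε₀ := ε₀) (b₀ := b₀) (lam := lam)
    (l1 := (1 - τ / 2) * w) (δ1 := τ * w / 4) (l2 := (1 - τ / 2) * ε₀) (δ2 := τ * ε₀ / 4) (M := M)
    hC1 ha hε hb (by positivity) (by positivity) (by linarith) (by linarith)
    (by rw [← hEd, ← hw]; linarith) (by linarith) (by rw [← hEd]; linarith)
  rw [← hEd] at H
  have hl1 : 0 < (1 - τ / 2) * w := mul_pos (by linarith) hwp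
  have hq : 0 ≤ (1 - τ) ^ 2 * ((a * ε₀ ^ 2 * E) * |b₀| / (2 * π * E)) := by positivity
  have := asym (q := (1 - τ) ^ 2 * ((a * ε₀ ^ 2 * E) * |b₀| / (2 * π * E)))
    (d := 2 * π * E / ((1 - τ / 2) * w * |b₀|)) (l := (1 - τ / 2) * ε₀) (ρ' := 2 * ρ + τ * ε₀ / 4)
    (m := M + 1) (N := NK0 x₀ t₀ a ε₀ b₀ lam) (by positivity) hq ?_ ?_
  · simpa using this
  · have h12 : 0 < 1 - τ / 2 := by linarith
    have e : (1 - τ) ^ 2 * ((a * ε₀ ^ 2 * E) * |b₀| / (2 * π * E)) * (2 * π * E / ((1 - τ / 2) * w * |b₀|))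
        = (1 - τ) ^ 2 * ε₀ / (1 - τ / 2) := by
      rw [hw]; field_simp
    rw [e, div_lt_iff₀ h12]
    nlinarith
  · intro R n h
    exact H R n (by linarith)
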